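/- arXiv:2511.18167 — 5 statements merged into one kernel-verified Lean document; each statement's English description precedes it below -/
import Mathlib

section
/- Let f : ℝ^d → ℝ be convex, differentiable, (μ,τ)-restricted strongly convex and (L,τ)-restricted smooth. Let s* ≤ s be positive integers with μ̄ = μ − 3τs > 0. Let Φ_s be a sparsifying operator at level s and let η ∈ [0, 1/4] be an upper bound on its relative concavity at sparsity level s*. Let θ̂ ∈ ℝ^d satisfy ‖θ̂‖₀ ≤ s*, f̂ = f(θ̂). Suppose θ_t ∈ ℝ^d satisfies ‖θ_t‖₀ ≤ s and ‖θ_t − θ̂‖² < 36‖Φ^HT_s(∇f(θ̂))‖²/μ̄², and define γ_t = max{f(θ_t) − f̂, 0}/(5‖Φ^HT_s(∇f(θ_t))‖²) (with the convention γ_t = 0 if the denominator vanishes) and θ_{t+1} = Φ_s(θ_t − γ_t ∇f(θ_t)). Then ‖θ_{t+1} − θ̂‖² ≤ (1 + 4η)‖θ_t − θ̂‖². -/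
open scoped RealInnerProductSpace BigOperators

noncomputable section

/-- The number of nonzero entries of a vector (the "ℓ0 norm"). -/
def spar {d : ℕ} (θ : EuclideanSpace ℝ (Fin d)) : ℕ :=
  (Finset.univ.filter fun i => θ i ≠ 0).card

/-- The ℓ1 norm of a vector. -/
def normL1 {d : ℕ} (θ : EuclideanSpace ℝ (Fin d)) : ℝ := ∑ i, |θ i|

/-- `Φ` is a hard thresholding operator at level `k`: it keeps the `k` entries of largest
absolute value (with some fixed tie-breaking rule) and sets all other entries to zero. -/
def IsHT (d k : ℕ) (Φ : EuclideanSpace ℝ (Fin d) → EuclideanSpace ℝ (Fin d)) : Prop :=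
  ∀ θ : EuclideanSpace ℝ (Fin d), ∃ S : Finset (Fin d), S.card = min k d ∧
    (∀ i ∈ S, Φ θ i = θ i) ∧ (∀ i, i ∉ S → Φ θ i = 0) ∧
    (∀ i ∈ S, ∀ j, j ∉ S → |θ j| ≤ |θ i|)

/-- `Φ` is a reciprocal thresholding operator at level `s`. -/
def IsRT (d s : ℕ) (Φ : EuclideanSpace ℝ (Fin d) → EuclideanSpace ℝ (Fin d)) : Prop :=
  ∀ θ : EuclideanSpace ℝ (Fin d), ∃ S : Finset (Fin d), S.card = min s d ∧
    (∀ i ∈ S, ∀ j, j ∉ S → |θ j| ≤ |θ i|) ∧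
    ∃ τhat : ℝ, (∀ j, j ∉ S → |θ j| ≤ τhat) ∧ (∃ j, j ∉ S ∧ |θ j| = τhat) ∧
      (∀ i ∈ S, Φ θ i = Real.sign (θ i) * (|θ i| + Real.sqrt ((θ i) ^ 2 - τhat ^ 2)) / 2) ∧
      (∀ i, i ∉ S → Φ θ i = 0)

/-- Restricted strong convexity. -/
def RSC {d : ℕ} (f : EuclideanSpace ℝ (Fin d) → ℝ) (μ τ : ℝ) : Prop :=
  ∀ θ1 θ2 : EuclideanSpace ℝ (Fin d),
    f θ1 - f θ2 - ⟪gradient f θ2, θ1 - θ2⟫ ≥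
      μ / 2 * ‖θ1 - θ2‖ ^ 2 - τ / 2 * normL1 (θ1 - θ2) ^ 2

/-- Restricted smoothness. -/
def RSS {d : ℕ} (f : EuclideanSpace ℝ (Fin d) → ℝ) (L τ : ℝ) : Prop :=
  ∀ θ1 θ2 : EuclideanSpace ℝ (Fin d),
    f θ1 - f θ2 - ⟪gradient f θ2, θ1 - θ2⟫ ≤
      L / 2 * ‖θ1 - θ2‖ ^ 2 + τ / 2 * normL1 (θ1 - θ2) ^ 2

/-- Weak restricted strong convexity. -/
def WRSC {d : ℕ} (f : EuclideanSpace ℝ (Fin d) → ℝ) (μ τ : ℝ) : Prop :=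
  ∀ θ1 θ2 : EuclideanSpace ℝ (Fin d),
    (‖θ1 - θ2‖ ≤ 1 →
      f θ1 - f θ2 - ⟪gradient f θ2, θ1 - θ2⟫ ≥
        μ / 2 * ‖θ1 - θ2‖ ^ 2 - τ / 2 * normL1 (θ1 - θ2) ^ 2) ∧
    (1 < ‖θ1 - θ2‖ →
      f θ1 - f θ2 - ⟪gradient f θ2, θ1 - θ2⟫ ≥
        ‖θ1 - θ2‖ * (μ / 2 - τ / 2 * normL1 (θ1 - θ2) ^ 2 / ‖θ1 - θ2‖ ^ 2))

/-- Coordinate restriction of a vector to an index set `S`. -/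
def restr {d : ℕ} (S : Finset (Fin d)) (θ : EuclideanSpace ℝ (Fin d)) :
    EuclideanSpace ℝ (Fin d) :=
  WithLp.toLp 2 fun i => if i ∈ S then θ i else 0

/-!
The threshold step is analysed by the three-point identity at `p = Φ z`, `z = x - γ • g`: relative
concavity bounds `⟪y - p, z - p⟫`, and the first-order inequality makes `γ⟪g, y - x⟫` a gain of
`γ (f x - f y)`. The remaining term `γ⟪x - p, g⟫` pairs `g` with a vector supported on at most `2 s`
coordinates, where `g` has norm at most `√2 ‖HT g‖`; completing the square costs `2 γ² ‖HT g‖²`,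
which the Polyak step size pays for. The expansion factor is `1 / (1 - 2 η)`, at most `1 + 4 η` for
`0 ≤ η ≤ 1 / 4`.
-/

lemma hasFDerivAt_apply_sub_le_of_convexOn {E : Type*} [NormedAddCommGroup E] [NormedSpace ℝ E]
    {K : Set E} {f : E → ℝ} {f' : E →L[ℝ] ℝ} {x y : E} (hf : ConvexOn ℝ K f)
    (hx : x ∈ K) (hy : y ∈ K) (hf' : HasFDerivAt f f' x) : f' (y - x) ≤ f y - f x := by
  have hderiv : HasDerivAt (f ∘ AffineMap.lineMap (k := ℝ) x y) (f' (y - x)) 0 :=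
    hf'.comp_hasDerivAt_of_eq 0 AffineMap.hasDerivAt_lineMap (AffineMap.lineMap_apply_zero x y).symm
  have hslope := (hf.comp_affineMap (AffineMap.lineMap (k := ℝ) x y)).le_slope_of_hasDerivAt
    (x := 0) (y := 1) (by simpa using hx) (by simpa using hy) one_pos hderiv
  simpa [slope_def_field] using hslope

lemma sum_le_sum_of_card_le_of_forall_le {ι M : Type*} [AddCommMonoid M] [LinearOrder M]
    [IsOrderedCancelAddMonoid M] {S T : Finset ι} {w : ι → M} (hcard : T.card ≤ S.card)
    (hw : ∀ i ∈ S, 0 ≤ w i) (htop : ∀ i ∈ S, ∀ j, j ∉ S → w j ≤ w i) :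
    ∑ i ∈ T, w i ≤ ∑ i ∈ S, w i := by
  classical
  rw [← Finset.sum_sdiff_le_sum_sdiff]
  have hcard' : (T \ S).card ≤ (S \ T).card := Finset.card_sdiff_le_card_sdiff_iff.mpr hcard
  have hnonneg : ∀ i ∈ S \ T, 0 ≤ w i := fun i hi => hw i (Finset.mem_sdiff.mp hi).1
  rcases (S \ T).eq_empty_or_nonempty with hempty | hne
  · have : T \ S = ∅ := by simpa [hempty] using hcard'
    simp [hempty, this]
  · obtain ⟨k, hk, hmin⟩ := Finset.exists_min_image (S \ T) w hne
    have hk' := (Finset.mem_sdiff.mp hk).1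
    calc ∑ i ∈ T \ S, w i ≤ (T \ S).card • w k :=
          Finset.sum_le_card_nsmul _ _ _ fun j hj => htop k hk' j (Finset.mem_sdiff.mp hj).2
      _ ≤ (S \ T).card • w k := nsmul_le_nsmul_left (hnonneg k hk) hcard'
      _ ≤ ∑ i ∈ S \ T, w i := Finset.card_nsmul_le_sum _ _ _ hmin

section Restriction

variable {d : ℕ}

lemma norm_restr_sq (S : Finset (Fin d)) (g : EuclideanSpace ℝ (Fin d)) :
    ‖restr S g‖ ^ 2 = ∑ i ∈ S, g i ^ 2 := by
  simp [EuclideanSpace.real_norm_sq_eq, restr, ite_pow]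

lemma norm_restr_union_sq_le (S T : Finset (Fin d)) (g : EuclideanSpace ℝ (Fin d)) :
    ‖restr (S ∪ T) g‖ ^ 2 ≤ ‖restr S g‖ ^ 2 + ‖restr T g‖ ^ 2 := by
  rw [norm_restr_sq, norm_restr_sq, norm_restr_sq, ← Finset.sum_union_inter]
  exact le_add_of_nonneg_right (Finset.sum_nonneg fun i _ => sq_nonneg (g i))

lemma inner_restr_of_forall_notMem {S : Finset (Fin d)} {x : EuclideanSpace ℝ (Fin d)}
    (hx : ∀ i, i ∉ S → x i = 0) (g : EuclideanSpace ℝ (Fin d)) : ⟪x, restr S g⟫ = ⟪x, g⟫ := by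
  simp only [PiLp.inner_apply, restr]
  refine Finset.sum_congr rfl fun i _ => ?_
  by_cases hi : i ∈ S
  · simp [hi]
  · simp [hx i hi]

end Restriction

namespace IsHT

variable {d s : ℕ} {HT : EuclideanSpace ℝ (Fin d) → EuclideanSpace ℝ (Fin d)}

lemma exists_eq_restr (hHT : IsHT d s HT) (g : EuclideanSpace ℝ (Fin d)) :
    ∃ S : Finset (Fin d), S.card = min s d ∧ HT g = restr S g ∧
      ∀ i ∈ S, ∀ j, j ∉ S → |g j| ≤ |g i| := by
  obtain ⟨S, hcard, hin, hout, htop⟩ := hHT g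
  refine ⟨S, hcard, ?_, htop⟩
  ext i
  by_cases hi : i ∈ S
  · simp [restr, hi, hin i hi]
  · simp [restr, hi, hout i hi]

lemma norm_restr_sq_le (hHT : IsHT d s HT) (g : EuclideanSpace ℝ (Fin d)) {T : Finset (Fin d)}
    (hT : T.card ≤ s) : ‖restr T g‖ ^ 2 ≤ ‖HT g‖ ^ 2 := by
  obtain ⟨S, hcard, hHTg, htop⟩ := hHT.exists_eq_restr g
  rw [hHTg, norm_restr_sq, norm_restr_sq]
  refine sum_le_sum_of_card_le_of_forall_le ?_ (fun i _ => sq_nonneg (g i))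
    fun i hi j hj => sq_le_sq.mpr (htop i hi j hj)
  exact hcard ▸ le_min hT (card_finset_fin_le T)

lemma inner_sub_le (hHT : IsHT d s HT) (g : EuclideanSpace ℝ (Fin d))
    {a b : EuclideanSpace ℝ (Fin d)} (ha : spar a ≤ s) (hb : spar b ≤ s) :
    ⟪a - b, g⟫ ≤ √2 * ‖HT g‖ * ‖a - b‖ := by
  let A : Finset (Fin d) := {i | a i ≠ 0}
  let B : Finset (Fin d) := {i | b i ≠ 0}
  have hsupp : ∀ i, i ∉ A ∪ B → (a - b) i = 0 := by
    intro i hi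
    simp only [A, B, Finset.mem_union, Finset.mem_filter_univ, not_or, not_not] at hi
    simp [hi.1, hi.2]
  have hnorm : ‖restr (A ∪ B) g‖ ≤ √2 * ‖HT g‖ := by
    refine le_of_sq_le_sq ?_ (by positivity)
    calc ‖restr (A ∪ B) g‖ ^ 2 ≤ ‖restr A g‖ ^ 2 + ‖restr B g‖ ^ 2 := norm_restr_union_sq_le A B g
      _ ≤ ‖HT g‖ ^ 2 + ‖HT g‖ ^ 2 :=
        add_le_add (hHT.norm_restr_sq_le g ha) (hHT.norm_restr_sq_le g hb)
      _ = (√2 * ‖HT g‖) ^ 2 := by rw [mul_pow, Real.sq_sqrt zero_le_two]; ring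
  calc ⟪a - b, g⟫ = ⟪a - b, restr (A ∪ B) g⟫ := (inner_restr_of_forall_notMem hsupp g).symm
    _ ≤ ‖a - b‖ * ‖restr (A ∪ B) g‖ := real_inner_le_norm _ _
    _ ≤ ‖a - b‖ * (√2 * ‖HT g‖) := by gcongr
    _ = √2 * ‖HT g‖ * ‖a - b‖ := mul_comm _ _

end IsHT

lemma one_sub_two_mul_norm_sub_sq_le_of_inner_le {E : Type*} [NormedAddCommGroup E]
    [InnerProductSpace ℝ E] {x y p g : E} {γ η δ C : ℝ} (hγ : 0 ≤ γ)
    (hconc : ⟪y - p, x - γ • g - p⟫ ≤ η * ‖y - p‖ ^ 2)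
    (hdescent : ⟪g, y - x⟫ ≤ -δ) (hC : ⟪x - p, g⟫ ≤ C * ‖x - p‖) :
    (1 - 2 * η) * ‖p - y‖ ^ 2 ≤ ‖x - y‖ ^ 2 - 2 * (γ * δ) + γ ^ 2 * C ^ 2 := by
  have hthree : ‖x - y‖ ^ 2 = ‖x - p‖ ^ 2 - 2 * ⟪y - p, x - p⟫ + ‖y - p‖ ^ 2 := by
    rw [← sub_sub_sub_cancel_right x y p, norm_sub_sq_real, real_inner_comm]
  have hstep : ⟪y - p, x - γ • g - p⟫ = ⟪y - p, x - p⟫ - γ * (⟪g, y - x⟫ + ⟪x - p, g⟫) := by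
    rw [sub_right_comm, inner_sub_right, real_inner_smul_right, real_inner_comm (y - x) g,
      ← inner_add_left, sub_add_sub_cancel]
  have hgain := mul_le_mul_of_nonneg_left hdescent hγ
  have hcost : 2 * (γ * ⟪x - p, g⟫) ≤ ‖x - p‖ ^ 2 + γ ^ 2 * C ^ 2 := by
    have hmul := mul_le_mul_of_nonneg_left hC hγ
    have hamgm := two_mul_le_add_sq ‖x - p‖ (γ * C)
    linarith
  rw [norm_sub_rev p y]
  linarith

lemma max_zero_div_mul_self (a b : ℝ) : max a 0 / b * a = b * (max a 0 / b) ^ 2 := by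
  have hmax : max a 0 * a = max a 0 ^ 2 := by
    rcases le_total a 0 with ha | ha
    · simp [ha]
    · simp [ha, sq]
  rcases eq_or_ne b 0 with rfl | hb
  · simp
  · field_simp
    exact hmax

lemma le_one_add_four_mul_of_one_sub_two_mul_le {η a b : ℝ} (hη0 : 0 ≤ η) (hη : η ≤ 1 / 4)
    (ha : 0 ≤ a) (h : (1 - 2 * η) * a ≤ b) : a ≤ (1 + 4 * η) * b := by
  have hfactor : 1 ≤ (1 + 4 * η) * (1 - 2 * η) := by nlinarith
  calc a ≤ (1 + 4 * η) * (1 - 2 * η) * a := le_mul_of_one_le_left ha hfactor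
    _ = (1 + 4 * η) * ((1 - 2 * η) * a) := mul_assoc _ _ _
    _ ≤ (1 + 4 * η) * b := by gcongr

theorem statement3_general {d : ℕ} (f : EuclideanSpace ℝ (Fin d) → ℝ) {sstar s : ℕ}
    {HT : EuclideanSpace ℝ (Fin d) → EuclideanSpace ℝ (Fin d)} (hHT : IsHT d s HT)
    {Φ : EuclideanSpace ℝ (Fin d) → EuclideanSpace ℝ (Fin d)} (hΦ : ∀ z, spar (Φ z) ≤ s)
    {η : ℝ} (hη0 : 0 ≤ η) (hη : η ≤ 1 / 4)
    (hconc : ∀ z y : EuclideanSpace ℝ (Fin d), spar y ≤ sstar →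
      ⟪y - Φ z, z - Φ z⟫ ≤ η * ‖y - Φ z‖ ^ 2)
    {θhat θt g : EuclideanSpace ℝ (Fin d)} (hθhat : spar θhat ≤ sstar) (hθt : spar θt ≤ s)
    (hg : ⟪g, θhat - θt⟫ ≤ f θhat - f θt) {c γ : ℝ} (hc : 1 ≤ c)
    (hγ : γ = max (f θt - f θhat) 0 / (c * ‖HT g‖ ^ 2)) :
    ‖Φ (θt - γ • g) - θhat‖ ^ 2 ≤ (1 + 4 * η) * ‖θt - θhat‖ ^ 2 := by
  have hγ0 : 0 ≤ γ := by rw [hγ]; positivity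
  have hpolyak : γ * (f θt - f θhat) = c * ‖HT g‖ ^ 2 * γ ^ 2 := by
    rw [hγ, max_zero_div_mul_self]
  have hbound := one_sub_two_mul_norm_sub_sq_le_of_inner_le hγ0
    (hconc (θt - γ • g) θhat hθhat) (hg.trans_eq (neg_sub _ _).symm)
    (hHT.inner_sub_le g hθt (hΦ _))
  have hbalance : ‖HT g‖ ^ 2 * γ ^ 2 ≤ c * (‖HT g‖ ^ 2 * γ ^ 2) :=
    le_mul_of_one_le_left (by positivity) hc
  refine le_one_add_four_mul_of_one_sub_two_mul_le hη0 hη (sq_nonneg _) ?_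
  rw [hpolyak, mul_pow, Real.sq_sqrt zero_le_two] at hbound
  linarith

/-- Theorem 1 of the paper: near `θ̂` the thresholded step expands distances by at most `1+4η`. -/
theorem statement3 {d : ℕ} (f : EuclideanSpace ℝ (Fin d) → ℝ)
    (μ τ L : ℝ) (sstar s : ℕ)
    (hconv : ConvexOn ℝ Set.univ f) (hdiff : Differentiable ℝ f)
    (hRSC : RSC f μ τ) (hRSS : RSS f L τ)
    (hsstar : 1 ≤ sstar) (hss : sstar ≤ s)
    (hmu : 0 < μ - 3 * τ * s)
    (HT : EuclideanSpace ℝ (Fin d) → EuclideanSpace ℝ (Fin d)) (hHT : IsHT d s HT)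
    (Φ : EuclideanSpace ℝ (Fin d) → EuclideanSpace ℝ (Fin d))
    (hΦ : ∀ z, spar (Φ z) ≤ s)
    (η : ℝ) (hη0 : 0 ≤ η) (hη : η ≤ 1 / 4)
    (hconc : ∀ z y : EuclideanSpace ℝ (Fin d), spar y ≤ sstar →
      ⟪y - Φ z, z - Φ z⟫ ≤ η * ‖y - Φ z‖ ^ 2)
    (θhat θt : EuclideanSpace ℝ (Fin d))
    (hθhat : spar θhat ≤ sstar) (hθt : spar θt ≤ s)
    (hnear : ‖θt - θhat‖ ^ 2 < 36 * ‖HT (gradient f θhat)‖ ^ 2 / (μ - 3 * τ * s) ^ 2)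
    (γ : ℝ)
    (hγ : γ = max (f θt - f θhat) 0 / (5 * ‖HT (gradient f θt)‖ ^ 2))
    (θnext : EuclideanSpace ℝ (Fin d))
    (hnext : θnext = Φ (θt - γ • gradient f θt)) :
    ‖θnext - θhat‖ ^ 2 ≤ (1 + 4 * η) * ‖θt - θhat‖ ^ 2 := by
  have hfirst : ⟪gradient f θt, θhat - θt⟫ ≤ f θhat - f θt :=
    hasFDerivAt_apply_sub_le_of_convexOn hconv trivial trivial (hdiff θt).hasGradientAt.hasFDerivAt
  exact hnext ▸ statement3_general f hHT hΦ hη0 hη hconc hθhat hθt hfirst (by norm_num) hγ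
end
end

section
/- Let Φ_s be a sparsifying operator at level s on ℝ^d and let η ∈ [0, 1/4] be an upper bound on its relative concavity at sparsity level s*. Let θ̃ ∈ ℝ^d, set θ⁺ = Φ_s(θ̃), let θ̂ ∈ ℝ^d with ‖θ̂‖₀ ≤ s*, and let S be the union of the supports of θ⁺ and θ̂. Then ‖θ⁺ − θ̂‖² ≤ (1 + 4η)‖[θ̃]_S − θ̂‖², where [θ̃]_S agrees with θ̃ on coordinates in S and vanishes outside S. -/
open scoped RealInnerProductSpace BigOperators

noncomputable section

/-!
Cauchy–Schwarz for `y - x` and `y - w` turns `⟪y - x, w - x⟫ ≤ η ‖y - x‖²` into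
`(1 - η) ‖x - y‖ ≤ ‖w - y‖`. Restricting `z` to coordinates on which both `x` and `y` are supported
does not change `⟪y - x, z - x⟫`, so this applies to `w = restr S z`; the constant comes from
`1 ≤ (1 + 4η)(1 - η)²` for `0 ≤ η ≤ 1/4`.
-/

section InnerProductSpace

variable {E : Type*} [SeminormedAddCommGroup E] [InnerProductSpace ℝ E]

lemma one_sub_mul_norm_sub_le_norm_sub {x y w : E} {η : ℝ}
    (h : ⟪y - x, w - x⟫ ≤ η * ‖y - x‖ ^ 2) : (1 - η) * ‖x - y‖ ≤ ‖w - y‖ := by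
  rw [norm_sub_rev x y, norm_sub_rev w y]
  obtain hxy | hxy := (norm_nonneg (y - x)).eq_or_lt
  · simp [← hxy]
  refine le_of_mul_le_mul_left ?_ hxy
  calc ‖y - x‖ * ((1 - η) * ‖y - x‖)
      = ‖y - x‖ ^ 2 - η * ‖y - x‖ ^ 2 := by ring
    _ ≤ ⟪y - x, y - x⟫ - ⟪y - x, w - x⟫ := by rw [real_inner_self_eq_norm_sq]; gcongr
    _ = ⟪y - x, y - w⟫ := by rw [← inner_sub_right, sub_sub_sub_cancel_right]
    _ ≤ ‖y - x‖ * ‖y - w‖ := real_inner_le_norm _ _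

end InnerProductSpace

lemma inner_restr_right_of_forall_notMem {d : ℕ} {S : Finset (Fin d)}
    {v : EuclideanSpace ℝ (Fin d)} (hv : ∀ i ∉ S, v i = 0) (z : EuclideanSpace ℝ (Fin d)) :
    ⟪v, restr S z⟫ = ⟪v, z⟫ := by
  simp only [PiLp.inner_apply]
  refine Finset.sum_congr rfl fun i _ => ?_
  by_cases hi : i ∈ S
  · simp [restr, hi]
  · simp [hv i hi]

section LinearOrderedField

variable {K : Type*} [Field K] [LinearOrder K] [IsStrictOrderedRing K] {η a b : K}

lemma one_le_one_add_four_mul_mul_one_sub_sq (hη0 : 0 ≤ η) (hη : η ≤ 1 / 4) :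
    1 ≤ (1 + 4 * η) * (1 - η) ^ 2 := by
  have hquad : 0 ≤ 2 - 7 * η + 4 * η ^ 2 := by linarith [sq_nonneg η]
  calc 1 ≤ 1 + η * (2 - 7 * η + 4 * η ^ 2) := le_add_of_nonneg_right (mul_nonneg hη0 hquad)
    _ = (1 + 4 * η) * (1 - η) ^ 2 := by ring

lemma sq_le_one_add_four_mul_mul_sq (hη0 : 0 ≤ η) (hη : η ≤ 1 / 4) (ha : 0 ≤ a)
    (hab : (1 - η) * a ≤ b) : a ^ 2 ≤ (1 + 4 * η) * b ^ 2 := by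
  have hη1 : 0 ≤ 1 - η := by linarith
  calc a ^ 2 ≤ (1 + 4 * η) * (1 - η) ^ 2 * a ^ 2 :=
        le_mul_of_one_le_left (sq_nonneg a) (one_le_one_add_four_mul_mul_one_sub_sq hη0 hη)
    _ = (1 + 4 * η) * ((1 - η) * a) ^ 2 := by ring
    _ ≤ (1 + 4 * η) * b ^ 2 := by gcongr

end LinearOrderedField

theorem statement5_general {d : ℕ} {x y z : EuclideanSpace ℝ (Fin d)} {η : ℝ}
    {S : Finset (Fin d)} (hx : ∀ i ∉ S, x i = 0) (hy : ∀ i ∉ S, y i = 0)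
    (hconc : ⟪y - x, z - x⟫ ≤ η * ‖y - x‖ ^ 2) :
    (1 - η) * ‖x - y‖ ≤ ‖restr S z - y‖ := by
  have hyx : ∀ i ∉ S, (y - x) i = 0 := fun i hi => by simp [hx i hi, hy i hi]
  apply one_sub_mul_norm_sub_le_norm_sub
  rwa [inner_sub_right, inner_restr_right_of_forall_notMem hyx, ← inner_sub_right]

/-- Equation (8) in the paper: the deviation introduced by the sparsifying operator is controlled
by the relative concavity bound `η ≤ 1/4`. -/
theorem statement5 {d : ℕ} (s sstar : ℕ)
    (Φ : EuclideanSpace ℝ (Fin d) → EuclideanSpace ℝ (Fin d))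
    (hΦ : ∀ z, spar (Φ z) ≤ s)
    (η : ℝ) (hη0 : 0 ≤ η) (hη : η ≤ 1 / 4)
    (hconc : ∀ z y : EuclideanSpace ℝ (Fin d), spar y ≤ sstar →
      ⟪y - Φ z, z - Φ z⟫ ≤ η * ‖y - Φ z‖ ^ 2)
    (θtil θhat : EuclideanSpace ℝ (Fin d)) (hθhat : spar θhat ≤ sstar)
    (S : Finset (Fin d))
    (hS : S = (Finset.univ.filter fun i => Φ θtil i ≠ 0) ∪
      (Finset.univ.filter fun i => θhat i ≠ 0)) :
    ‖Φ θtil - θhat‖ ^ 2 ≤ (1 + 4 * η) * ‖restr S θtil - θhat‖ ^ 2 :=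
  sq_le_one_add_four_mul_mul_sq hη0 hη (norm_nonneg _) <|
    statement5_general (by simp_all) (by simp_all) (hconc θtil θhat hθhat)
end
end

section
/- For any vectors g, v ∈ ℝ^d and any natural number k, if ‖v‖₀ ≤ k then |⟨g, v⟩| ≤ ‖Φ^HT_k(g)‖ · ‖v‖. -/
open scoped RealInnerProductSpace BigOperators

noncomputable section

/-!
Cauchy–Schwarz on the support of `v` bounds `|⟪g, v⟫|` by `‖v‖` times the norm of the part of `g`
carried by at most `k` coordinates. An exchange argument shows that no `k` coordinates of `g` carry
more energy than the ones retained by hard thresholding: outside their intersection, each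
coordinate given up is dominated by each retained one, and there are at least as many of the latter.
-/

open Finset

section Exchange

variable {ι M : Type*} [AddCommMonoid M] [LinearOrder M] [IsOrderedAddMonoid M]
  {s t : Finset ι} {f : ι → M}

theorem sum_le_sum_of_card_le_of_forall_le_s7 (hcard : #t ≤ #s) (hnonneg : ∀ i ∈ s, 0 ≤ f i)
    (hle : ∀ i ∈ s, ∀ j ∈ t, f j ≤ f i) : ∑ j ∈ t, f j ≤ ∑ i ∈ s, f i := by
  rcases s.eq_empty_or_nonempty with rfl | hs
  · obtain rfl : t = ∅ := by simpa using hcard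
    rfl
  · obtain ⟨m, hm, hmin⟩ := s.exists_min_image f hs
    calc ∑ j ∈ t, f j ≤ #t • f m := sum_le_card_nsmul t f (f m) (hle m hm)
      _ ≤ #s • f m := nsmul_le_nsmul_left (hnonneg m hm) hcard
      _ ≤ ∑ i ∈ s, f i := card_nsmul_le_sum s f (f m) hmin

theorem sum_le_sum_of_card_le_of_forall_notMem_le (hcard : #t ≤ #s)
    (hnonneg : ∀ i ∈ s, 0 ≤ f i) (hle : ∀ i ∈ s, ∀ j ∉ s, f j ≤ f i) :
    ∑ j ∈ t, f j ≤ ∑ i ∈ s, f i := by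
  classical
  have hsdiff : ∑ j ∈ t \ s, f j ≤ ∑ i ∈ s \ t, f i :=
    sum_le_sum_of_card_le_of_forall_le_s7 (card_sdiff_le_card_sdiff_iff.mpr hcard)
      (fun i hi ↦ hnonneg i (mem_sdiff.mp hi).1)
      (fun i hi j hj ↦ hle i (mem_sdiff.mp hi).1 j (mem_sdiff.mp hj).2)
  calc ∑ j ∈ t, f j = ∑ j ∈ t ∩ s, f j + ∑ j ∈ t \ s, f j := (sum_inter_add_sum_sdiff t s f).symm
    _ ≤ ∑ i ∈ s ∩ t, f i + ∑ i ∈ s \ t, f i := by rw [inter_comm]; gcongr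
    _ = ∑ i ∈ s, f i := sum_inter_add_sum_sdiff s t f

end Exchange

section PartialEnergy

variable {ι : Type*} [Fintype ι] {E : ι → Type*}

theorem sum_norm_sq_le_norm_sq [∀ i, SeminormedAddCommGroup (E i)] (s : Finset ι) (x : PiLp 2 E) :
    ∑ i ∈ s, ‖x i‖ ^ 2 ≤ ‖x‖ ^ 2 := by
  rw [PiLp.norm_sq_eq_of_L2]
  exact sum_le_univ_sum_of_nonneg fun i ↦ sq_nonneg ‖x i‖

theorem norm_inner_le_sqrt_sum_norm_sq_mul_norm {𝕜 : Type*} [RCLike 𝕜]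
    [∀ i, NormedAddCommGroup (E i)] [∀ i, InnerProductSpace 𝕜 (E i)] {s : Finset ι}
    (x : PiLp 2 E) {y : PiLp 2 E} (hy : ∀ i ∉ s, y i = 0) :
    ‖inner 𝕜 x y‖ ≤ √(∑ i ∈ s, ‖x i‖ ^ 2) * ‖y‖ := by
  have hinner : inner 𝕜 x y = ∑ i ∈ s, inner 𝕜 (x i) (y i) := by
    rw [PiLp.inner_apply]
    refine (sum_subset s.subset_univ fun i _ hi ↦ ?_).symm
    rw [hy i hi, inner_zero_right]
  calc ‖inner 𝕜 x y‖ ≤ ∑ i ∈ s, ‖x i‖ * ‖y i‖ := by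
        rw [hinner]
        exact norm_sum_le_of_le s fun i _ ↦ norm_inner_le_norm (x i) (y i)
    _ ≤ √(∑ i ∈ s, ‖x i‖ ^ 2) * √(∑ i ∈ s, ‖y i‖ ^ 2) := Real.sum_mul_le_sqrt_mul_sqrt s _ _
    _ ≤ √(∑ i ∈ s, ‖x i‖ ^ 2) * ‖y‖ := by
        gcongr
        exact Real.sqrt_le_iff.mpr ⟨norm_nonneg y, sum_norm_sq_le_norm_sq s y⟩

end PartialEnergy

theorem IsHT.sum_norm_sq_le {d k : ℕ}
    {Φ : EuclideanSpace ℝ (Fin d) → EuclideanSpace ℝ (Fin d)} (hΦ : IsHT d k Φ)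
    (θ : EuclideanSpace ℝ (Fin d)) {t : Finset (Fin d)} (ht : #t ≤ k) :
    ∑ i ∈ t, ‖θ i‖ ^ 2 ≤ ‖Φ θ‖ ^ 2 := by
  obtain ⟨s, hs, hkeep, -, hmax⟩ := hΦ θ
  have hcard : #t ≤ #s := hs ▸ le_min ht (card_finset_fin_le t)
  calc ∑ i ∈ t, ‖θ i‖ ^ 2 ≤ ∑ i ∈ s, ‖θ i‖ ^ 2 :=
        sum_le_sum_of_card_le_of_forall_notMem_le hcard (fun i _ ↦ sq_nonneg ‖θ i‖)
          fun i hi j hj ↦ pow_le_pow_left₀ (norm_nonneg (θ j)) (hmax i hi j hj) 2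
    _ = ∑ i ∈ s, ‖Φ θ i‖ ^ 2 := sum_congr rfl fun i hi ↦ by rw [hkeep i hi]
    _ ≤ ‖Φ θ‖ ^ 2 := sum_norm_sq_le_norm_sq s (Φ θ)

/-- Restricted Cauchy–Schwarz: pairing a vector with a `k`-sparse vector only sees the `k`
largest-magnitude entries. -/
theorem statement7 {d k : ℕ}
    (HT : EuclideanSpace ℝ (Fin d) → EuclideanSpace ℝ (Fin d)) (hHT : IsHT d k HT)
    (g v : EuclideanSpace ℝ (Fin d)) (hv : spar v ≤ k) :
    |⟪g, v⟫| ≤ ‖HT g‖ * ‖v‖ := by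
  have hsupp : ∀ i ∉ univ.filter (fun i ↦ v i ≠ 0), v i = 0 := by simp
  calc |⟪g, v⟫| ≤ √(∑ i with v i ≠ 0, ‖g i‖ ^ 2) * ‖v‖ :=
        norm_inner_le_sqrt_sum_norm_sq_mul_norm (𝕜 := ℝ) g hsupp
    _ ≤ ‖HT g‖ * ‖v‖ := by
        gcongr
        exact Real.sqrt_le_iff.mpr ⟨norm_nonneg (HT g), hHT.sum_norm_sq_le g hv⟩
end
end

section
/- Let 1 ≤ s* < s < d. The relative concavity of the reciprocal thresholding operator Φ^RT_s at sparsity level s* satisfies η_{s*}(Φ^RT_s) ≤ (s*/s) / min{1, 4(1 − s*/s)}; that is, for all y, z ∈ ℝ^d with ‖y‖₀ ≤ s* and y ≠ Φ^RT_s(z), ⟨y − Φ^RT_s(z), z − Φ^RT_s(z)⟩ ≤ ((s*/s)/min{1, 4(1 − s*/s)})·‖y − Φ^RT_s(z)‖². -/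
open scoped RealInnerProductSpace BigOperators

noncomputable section

/-!
On a kept coordinate the reciprocal threshold `w` of `x` solves `w * (x - w) = τ ^ 2 / 4`, so a
kept coordinate outside the support of `y` contributes at most `-τ ^ 2 / 4` to
`⟪y - w, x - w⟫ - c * ‖y - w‖ ^ 2`. Completing the square, a coordinate in the support of `y`
contributes at most `τ ^ 2 / 4 * (1 / (4 * c))` if it is kept and at most `τ ^ 2 / 4 * (1 / c)`
if it is discarded. Hence, if `k ≥ 1 / c` and `k - 1 ≥ 1 / (4 * c)`, the total is at most
`τ ^ 2 / 4 * (k * ‖y‖₀ - s)`. The stated bound is the smallest `c` allowing `k = s / s*`, which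
makes this nonpositive.
-/

/-- The value of the reciprocal thresholding operator with threshold `τ` on a kept coordinate `x`:
the root of larger modulus of `w * (x - w) = τ ^ 2 / 4`, meaningful for `τ ^ 2 ≤ x ^ 2`. -/
def reciprocalThreshold (τ x : ℝ) : ℝ :=
  Real.sign x * (|x| + √(x ^ 2 - τ ^ 2)) / 2

lemma sub_reciprocalThreshold (τ x : ℝ) :
    x - reciprocalThreshold τ x = Real.sign x * (|x| - √(x ^ 2 - τ ^ 2)) / 2 := by
  have sign_mul_abs : Real.sign x * |x| = x := by
    rcases lt_trichotomy x 0 with hx | rfl | hx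
    · simp [Real.sign_of_neg hx, abs_of_neg hx]
    · simp
    · simp [Real.sign_of_pos hx, abs_of_pos hx]
  unfold reciprocalThreshold
  linear_combination -sign_mul_abs

lemma reciprocalThreshold_mul_sub {τ x : ℝ} (h : τ ^ 2 ≤ x ^ 2) :
    reciprocalThreshold τ x * (x - reciprocalThreshold τ x) = τ ^ 2 / 4 := by
  have sign_sq_mul : Real.sign x ^ 2 * τ ^ 2 = τ ^ 2 := by
    rcases eq_or_ne x 0 with rfl | hx
    · have hτ : τ = 0 := by simpa [sq_nonpos_iff] using h
      simp [hτ]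
    · rcases Real.sign_apply_eq_of_ne_zero x hx with hs | hs <;> simp [hs]
  have sq_sqrt := Real.sq_sqrt (sub_nonneg.2 h)
  rw [sub_reciprocalThreshold, reciprocalThreshold]
  linear_combination Real.sign x ^ 2 / 4 * (sq_abs x - sq_sqrt) + sign_sq_mul / 4

lemma sq_sub_reciprocalThreshold_le {τ x : ℝ} (h : τ ^ 2 ≤ x ^ 2) :
    (x - reciprocalThreshold τ x) ^ 2 ≤ τ ^ 2 / 4 := by
  have sqrt_le : √(x ^ 2 - τ ^ 2) ≤ |x| :=
    Real.sqrt_le_iff.2 ⟨abs_nonneg x, by linarith [sq_abs x, sq_nonneg τ]⟩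
  have gap_nonneg : 0 ≤ Real.sign x ^ 2 * (√(x ^ 2 - τ ^ 2) * (|x| - √(x ^ 2 - τ ^ 2))) :=
    mul_nonneg (sq_nonneg _) (mul_nonneg (Real.sqrt_nonneg _) (sub_nonneg.2 sqrt_le))
  rw [← reciprocalThreshold_mul_sub h, sub_reciprocalThreshold, reciprocalThreshold]
  linarith

lemma mul_le_mul_sq_add_mul {c m r t : ℝ} (hc : 0 < c) (hm : 1 ≤ 4 * c * m) (hr : r ^ 2 ≤ t)
    (u : ℝ) : u * r ≤ c * u ^ 2 + t * m := by
  have hm₀ : 0 < m := pos_of_mul_pos_right (one_pos.trans_le hm) (by positivity)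
  have amgm : u * r ≤ c * u ^ 2 + r ^ 2 / (4 * c) := by
    have completed_square :
        c * u ^ 2 + r ^ 2 / (4 * c) - u * r = (2 * c * u - r) ^ 2 / (4 * c) := by
      field_simp
      ring
    have : 0 ≤ (2 * c * u - r) ^ 2 / (4 * c) := by positivity
    linarith
  calc
    u * r ≤ c * u ^ 2 + r ^ 2 / (4 * c) := amgm
    _ ≤ c * u ^ 2 + r ^ 2 * m := by
      rw [div_eq_mul_inv]
      gcongr
      rwa [inv_le_iff_one_le_mul₀' (by positivity)]
    _ ≤ c * u ^ 2 + t * m := by gcongr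

lemma sub_mul_sub_reciprocalThreshold_le {c k τ x : ℝ} (hc : 0 < c) (hk : 1 ≤ 4 * c * (k - 1))
    (h : τ ^ 2 ≤ x ^ 2) (y : ℝ) :
    (y - reciprocalThreshold τ x) * (x - reciprocalThreshold τ x) ≤
      c * (y - reciprocalThreshold τ x) ^ 2 + τ ^ 2 / 4 * ((if y ≠ 0 then k else 0) - 1) := by
  split_ifs with hy
  · exact mul_le_mul_sq_add_mul hc hk (sq_sub_reciprocalThreshold_le h) _
  · obtain rfl : y = 0 := not_not.1 hy
    linarith [reciprocalThreshold_mul_sub h, mul_nonneg hc.le (sq_nonneg (reciprocalThreshold τ x))]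

lemma mul_le_mul_sq_add_mul_ite {c k τ x : ℝ} (hc : 0 < c) (hk : 1 ≤ c * k)
    (h : x ^ 2 ≤ τ ^ 2) (y : ℝ) :
    y * x ≤ c * y ^ 2 + τ ^ 2 / 4 * (if y ≠ 0 then k else 0) := by
  split_ifs with hy
  · linarith [mul_le_mul_sq_add_mul (m := k / 4) hc (by linarith) h y]
  · simp [not_not.1 hy]

lemma sum_ite_ne_zero_sub_ite_mem {d : ℕ} (y : EuclideanSpace ℝ (Fin d)) (S : Finset (Fin d))
    (k : ℝ) :
    ∑ i, ((if y i ≠ 0 then k else 0) - if i ∈ S then 1 else 0) = spar y * k - S.card := by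
  rw [Finset.sum_sub_distrib, ← Finset.sum_filter, Finset.sum_const, nsmul_eq_mul]
  simp [spar]

namespace IsRT

variable {d s : ℕ} {Φ : EuclideanSpace ℝ (Fin d) → EuclideanSpace ℝ (Fin d)}

lemma exists_threshold (hΦ : IsRT d s Φ) (z : EuclideanSpace ℝ (Fin d)) :
    ∃ (S : Finset (Fin d)) (τ : ℝ), S.card = s ∧
      (∀ i ∈ S, τ ^ 2 ≤ z i ^ 2 ∧ Φ z i = reciprocalThreshold τ (z i)) ∧
      ∀ i ∉ S, z i ^ 2 ≤ τ ^ 2 ∧ Φ z i = 0 := by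
  obtain ⟨S, hcard, hS, _, hle, ⟨j, hj, rfl⟩, hin, hout⟩ := hΦ z
  have card_lt : S.card < d := by
    simpa using Finset.card_lt_univ_of_notMem hj
  exact ⟨S, |z j|, by omega, fun i hi ↦ ⟨by simpa using sq_le_sq.2 (hS i hi j hj), hin i hi⟩,
    fun i hi ↦ ⟨by simpa using sq_le_sq.2 (hle i hi), hout i hi⟩⟩

lemma inner_sub_sub_le_mul_norm_sq (hΦ : IsRT d s Φ) {c k : ℝ} (hc : 0 < c) (hck : 1 ≤ c * k)
    (hck' : 1 ≤ 4 * c * (k - 1)) {y : EuclideanSpace ℝ (Fin d)} (hy : spar y * k ≤ s)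
    (z : EuclideanSpace ℝ (Fin d)) :
    ⟪y - Φ z, z - Φ z⟫ ≤ c * ‖y - Φ z‖ ^ 2 := by
  obtain ⟨S, τ, hcard, hin, hout⟩ := hΦ.exists_threshold z
  have coordinate_le (i : Fin d) : (y i - Φ z i) * (z i - Φ z i) ≤ c * (y i - Φ z i) ^ 2 +
      τ ^ 2 / 4 * ((if y i ≠ 0 then k else 0) - if i ∈ S then 1 else 0) := by
    by_cases hi : i ∈ S
    · obtain ⟨hτ, hΦi⟩ := hin i hi
      simpa only [hΦi, if_pos hi] using sub_mul_sub_reciprocalThreshold_le hc hck' hτ (y i)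
    · obtain ⟨hτ, hΦi⟩ := hout i hi
      simpa only [hΦi, if_neg hi, sub_zero] using mul_le_mul_sq_add_mul_ite hc hck hτ (y i)
  calc
    ⟪y - Φ z, z - Φ z⟫ = ∑ i, (y i - Φ z i) * (z i - Φ z i) := by
      simp [PiLp.inner_apply, mul_comm]
    _ ≤ ∑ i, (c * (y i - Φ z i) ^ 2 +
        τ ^ 2 / 4 * ((if y i ≠ 0 then k else 0) - if i ∈ S then 1 else 0)) :=
      Finset.sum_le_sum fun i _ ↦ coordinate_le i
    _ = c * ‖y - Φ z‖ ^ 2 + τ ^ 2 / 4 * (spar y * k - s) := by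
      rw [Finset.sum_add_distrib, ← Finset.mul_sum, ← Finset.mul_sum,
        sum_ite_ne_zero_sub_ite_mem, hcard, EuclideanSpace.real_norm_sq_eq]
      rfl
    _ ≤ c * ‖y - Φ z‖ ^ 2 :=
      add_le_of_nonpos_right (mul_nonpos_of_nonneg_of_nonpos (by positivity) (sub_nonpos.2 hy))

end IsRT

/-- The bound on the relative concavity of reciprocal thresholding as a function of the relative
sparsity `ρ = s* / s`, meaningful for `ρ < 1`. -/
def concavityBound (ρ : ℝ) : ℝ :=
  ρ / min 1 (4 * (1 - ρ))

section concavityBound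

variable {ρ : ℝ}

lemma concavityBound_pos (hρ₀ : 0 < ρ) (hρ₁ : ρ < 1) : 0 < concavityBound ρ :=
  div_pos hρ₀ (lt_min one_pos (by linarith))

lemma one_le_concavityBound_mul_inv (hρ₀ : 0 < ρ) (hρ₁ : ρ < 1) :
    1 ≤ concavityBound ρ * ρ⁻¹ := by
  have min_pos : 0 < min 1 (4 * (1 - ρ)) := lt_min one_pos (by linarith)
  calc
    1 ≤ 1 / min 1 (4 * (1 - ρ)) := (one_le_div min_pos).2 (min_le_left _ _)
    _ = concavityBound ρ * ρ⁻¹ := by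
      unfold concavityBound
      field_simp

lemma one_le_four_mul_concavityBound_mul_inv_sub_one (hρ₀ : 0 < ρ) (hρ₁ : ρ < 1) :
    1 ≤ 4 * concavityBound ρ * (ρ⁻¹ - 1) := by
  have min_pos : 0 < min 1 (4 * (1 - ρ)) := lt_min one_pos (by linarith)
  calc
    1 ≤ 4 * (1 - ρ) / min 1 (4 * (1 - ρ)) := (one_le_div min_pos).2 (min_le_right _ _)
    _ = 4 * concavityBound ρ * (ρ⁻¹ - 1) := by
      unfold concavityBound
      field_simp

end concavityBound

/-- Bound on the relative concavity of the reciprocal thresholding operator. -/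
theorem statement9 {d : ℕ} (sstar s : ℕ)
    (h1 : 1 ≤ sstar) (h2 : sstar < s) (h3 : s < d)
    (RT : EuclideanSpace ℝ (Fin d) → EuclideanSpace ℝ (Fin d)) (hRT : IsRT d s RT)
    (y z : EuclideanSpace ℝ (Fin d)) (hy : spar y ≤ sstar) (hne : y ≠ RT z) :
    ⟪y - RT z, z - RT z⟫ ≤
      (((sstar : ℝ) / s) / min 1 (4 * (1 - (sstar : ℝ) / s))) * ‖y - RT z‖ ^ 2 := by
  have hsstar : (0 : ℝ) < sstar := by exact_mod_cast h1
  have hlt : (sstar : ℝ) < s := by exact_mod_cast h2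
  have hs : (0 : ℝ) < s := hsstar.trans hlt
  set ρ := (sstar : ℝ) / s with hρ
  have hρ₀ : 0 < ρ := div_pos hsstar hs
  have hρ₁ : ρ < 1 := (div_lt_one hs).2 hlt
  have hsupport : spar y * ρ⁻¹ ≤ s := calc
    (spar y : ℝ) * ρ⁻¹ ≤ sstar * ρ⁻¹ := by gcongr
    _ = s := by rw [hρ, inv_div, mul_div_cancel₀ _ hsstar.ne']
  exact hRT.inner_sub_sub_le_mul_norm_sq (concavityBound_pos hρ₀ hρ₁)
    (one_le_concavityBound_mul_inv hρ₀ hρ₁)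
    (one_le_four_mul_concavityBound_mul_inv_sub_one hρ₀ hρ₁) hsupport z
end
end

section
/- There exist universal constants c₀, c₁ > 0 such that the following holds for all positive integers n, d, s*, s with 1 ≤ s* < s < d. Let Σ be a d×d positive definite matrix with ζ(Σ) = max_i Σ_{ii}, let θ* ∈ ℝ^d with ‖θ*‖₀ ≤ s*, and let σ > 0. Let X ∈ ℝ^{n×d} be random with i.i.d. rows distributed as the centered multivariate Gaussian N(0,Σ), let w ∈ ℝ^n be an independent Gaussian vector N(0, σ²I_n), and set y = Xθ* + w and f(θ) = (1/(2n))‖y − Xθ‖². Define L = 2σ_max(Σ), μ = σ_min(Σ)/2, τ = c₁·ζ(Σ)·log(d)/n, μ̄ = μ − 3τs, κ̄ = (L + 3τs)/μ̄, C = 2√(ζ(Σ)), and R = 288·C²σ²·s·log(d)/(n·μ̄²). Assume μ̄ > 0, κ̄ ≥ 1 and s ≥ 320·κ̄·s*. Let θ_0 ∈ ℝ^d with ‖θ_0‖₀ ≤ s and θ_{t+1} = Φ^RT_s(θ_t − γ_t ∇f(θ_t)) with γ_t = max{f(θ_t) − f(θ*), 0}/(5‖Φ^HT_s(∇f(θ_t))‖²)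 (with the convention γ_t = 0 if the denominator vanishes). Then with probability at least 1 − e^{−c₀ n} − 2/d the following two statements hold simultaneously: (i) for every t, if ‖θ_t − θ*‖² ≥ R then ‖θ_{t+1} − θ*‖² ≤ (1 − 1/(80κ̄))‖θ_t − θ*‖²; (ii) if ‖θ_T − θ*‖² < R for some index T, then ‖θ_t − θ*‖² ≤ (1 + 1/(80κ̄))·R for all t ≥ T. -/
open scoped RealInnerProductSpace BigOperators

noncomputable section

open MeasureTheory ProbabilityTheory
open scoped MatrixOrder

/-!
Reciprocal thresholding at level `s` is a projection onto sparse vectors up to a small relative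
concavity defect: `⟪y - RT z, z - RT z⟫ ≤ k / (s - k) * ‖y - RT z‖ ^ 2` for every `k`-sparse `y`.
Hence a Polyak step decreases the squared distance to `θstar` by a multiple of the objective gap,
up to a factor `1 + O(k / s)`. All vectors that occur are `2s`-sparse, so the only properties of the
data that matter are bounds on the `2s`-restricted eigenvalues of the design and a bound on the
coordinates of the noise gradient; outside the ball of squared radius `R` the noise is dominated,
and `s ≥ 320 κ k` makes the gain larger than the defect.

For Gaussian data each squared response `‖Z v + b z‖ ^ 2` is a scaled `χ²` variable. Its exponential
concentration and a union bound over integer grid vectors give the restricted eigenvalues, while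
polarization between `b` and `-b` gives the noise bound. The assumption `μbar > 0` forces `n` to be
at least a large multiple of `s log d`, which pays for the union bound, and `κ ≤ s ≤ d` bounds the
condition number of the covariance by `d`, so a grid of mesh `d ^ (-3)` controls all sparse
vectors.
-/

section Sparse

variable {d m : ℕ} {g u θ : EuclideanSpace ℝ (Fin d)}

lemma spar_le_iff_exists_finset :
    spar θ ≤ m ↔ ∃ S : Finset (Fin d), S.card ≤ m ∧ ∀ i ∉ S, θ i = 0 := by
  refine ⟨fun h => ⟨_, h, fun i hi => by simpa using hi⟩, fun ⟨S, hS, h⟩ => ?_⟩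
  refine (Finset.card_le_card fun i hi => ?_).trans hS
  by_contra hiS
  exact (Finset.mem_filter.1 hi).2 (h i hiS)

lemma spar_sub_le (u v : EuclideanSpace ℝ (Fin d)) : spar (u - v) ≤ spar u + spar v := by
  obtain ⟨S, hS, hu⟩ := spar_le_iff_exists_finset.1 (le_refl (spar u))
  obtain ⟨T, hT, hv⟩ := spar_le_iff_exists_finset.1 (le_refl (spar v))
  refine spar_le_iff_exists_finset.2
    ⟨S ∪ T, (Finset.card_union_le S T).trans (add_le_add hS hT), fun i hi => ?_⟩
  rw [Finset.notMem_union] at hi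
  simp [hu i hi.1, hv i hi.2]

lemma inner_eq_sum_of_forall_notMem {S : Finset (Fin d)} (hu : ∀ i ∉ S, u i = 0) :
    ⟪g, u⟫ = ∑ i ∈ S, g i * u i := by
  rw [PiLp.inner_apply]
  refine (Finset.sum_subset S.subset_univ fun i _ hi => by simp [hu i hi]).symm.trans
    (Finset.sum_congr rfl fun i _ => ?_)
  simp [mul_comm]

lemma inner_sq_le_sum_sq_mul_norm_sq {S : Finset (Fin d)} (hu : ∀ i ∉ S, u i = 0) :
    ⟪g, u⟫ ^ 2 ≤ (∑ i ∈ S, g i ^ 2) * ‖u‖ ^ 2 := by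
  rw [inner_eq_sum_of_forall_notMem hu, EuclideanSpace.real_norm_sq_eq]
  refine (Finset.sum_mul_sq_le_sq_mul_sq S g u).trans ?_
  gcongr
  exact S.subset_univ

lemma abs_inner_le_of_spar_le {l : ℝ} (hg : ∀ i, |g i| ≤ l) (hu : spar u ≤ m) (hl : 0 ≤ l) :
    |⟪g, u⟫| ≤ √m * l * ‖u‖ := by
  obtain ⟨S, hS, hu⟩ := spar_le_iff_exists_finset.1 hu
  refine abs_le_of_sq_le_sq ?_ (by positivity)
  calc ⟪g, u⟫ ^ 2 ≤ (∑ i ∈ S, g i ^ 2) * ‖u‖ ^ 2 := inner_sq_le_sum_sq_mul_norm_sq hu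
    _ ≤ (S.card • l ^ 2) * ‖u‖ ^ 2 := by
      gcongr
      exact Finset.sum_le_card_nsmul _ _ _ fun i _ => sq_le_sq' (neg_le_of_abs_le (hg i))
        (le_of_abs_le (hg i))
    _ ≤ (m * l ^ 2) * ‖u‖ ^ 2 := by
      rw [nsmul_eq_mul]
      gcongr
    _ = (√m * l * ‖u‖) ^ 2 := by
      rw [mul_pow, mul_pow, Real.sq_sqrt m.cast_nonneg]

end Sparse

section HardThresholding

variable {d k : ℕ} {HT : EuclideanSpace ℝ (Fin d) → EuclideanSpace ℝ (Fin d)}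

lemma IsHT.spar_le (h : IsHT d k HT) (g : EuclideanSpace ℝ (Fin d)) : spar (HT g) ≤ k := by
  obtain ⟨S, hS, -, hoff, -⟩ := h g
  exact spar_le_iff_exists_finset.2 ⟨S, hS.trans_le (min_le_left k d), hoff⟩

lemma IsHT.inner_self (h : IsHT d k HT) (g : EuclideanSpace ℝ (Fin d)) :
    ⟪g, HT g⟫ = ‖HT g‖ ^ 2 := by
  obtain ⟨S, -, hon, hoff, -⟩ := h g
  rw [← real_inner_self_eq_norm_sq, inner_eq_sum_of_forall_notMem hoff,
    inner_eq_sum_of_forall_notMem hoff]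
  exact Finset.sum_congr rfl fun i hi => by rw [hon i hi]

lemma IsHT.norm_sq_eq_sum (h : IsHT d k HT) (g : EuclideanSpace ℝ (Fin d)) :
    ∃ S : Finset (Fin d), S.card = min k d ∧ ‖HT g‖ ^ 2 = ∑ i ∈ S, g i ^ 2 ∧
      ∀ i ∈ S, ∀ j ∉ S, g j ^ 2 ≤ g i ^ 2 := by
  obtain ⟨S, hS, hon, hoff, hdom⟩ := h g
  refine ⟨S, hS, ?_, fun i hi j hj => sq_le_sq.2 (hdom i hi j hj)⟩
  rw [← h.inner_self, inner_eq_sum_of_forall_notMem hoff]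
  exact Finset.sum_congr rfl fun i hi => by rw [hon i hi, sq]

lemma sum_le_sum_of_card_le_of_dominates {ι : Type*} {f : ι → ℝ} {A S : Finset ι}
    (hf : ∀ i, 0 ≤ f i) (hcard : A.card ≤ S.card) (hdom : ∀ i ∈ S, ∀ j ∉ S, f j ≤ f i) :
    ∑ i ∈ A, f i ≤ ∑ i ∈ S, f i := by
  classical
  rw [← Finset.sum_sdiff_le_sum_sdiff]
  have hcard' : (A \ S).card ≤ (S \ A).card := Finset.card_sdiff_le_card_sdiff_iff.2 hcard
  obtain he | hne := (A \ S).eq_empty_or_nonempty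
  · rw [he, Finset.sum_empty]
    exact Finset.sum_nonneg fun i _ => hf i
  · obtain ⟨j, hj, hmax⟩ := Finset.exists_max_image (A \ S) f hne
    calc ∑ i ∈ A \ S, f i ≤ (A \ S).card • f j := Finset.sum_le_card_nsmul _ _ _ hmax
      _ ≤ (S \ A).card • f j := nsmul_le_nsmul_left (hf j) hcard'
      _ ≤ ∑ i ∈ S \ A, f i := Finset.card_nsmul_le_sum _ _ _ fun i hi =>
        hdom i (Finset.mem_sdiff.1 hi).1 j (Finset.mem_sdiff.1 hj).2

lemma IsHT.sum_sq_le_norm_sq (h : IsHT d k HT) (g : EuclideanSpace ℝ (Fin d))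
    {A : Finset (Fin d)} (hA : A.card ≤ k) : ∑ i ∈ A, g i ^ 2 ≤ ‖HT g‖ ^ 2 := by
  obtain ⟨S, hS, hnorm, hdom⟩ := h.norm_sq_eq_sum g
  rw [hnorm]
  refine sum_le_sum_of_card_le_of_dominates (fun i => sq_nonneg (g i)) ?_ hdom
  rw [hS]
  exact le_min hA (by simpa using A.card_le_univ)

lemma IsHT.inner_sq_le (h : IsHT d k HT) (g : EuclideanSpace ℝ (Fin d))
    {u : EuclideanSpace ℝ (Fin d)} (hu : spar u ≤ 2 * k) :
    ⟪g, u⟫ ^ 2 ≤ 2 * ‖HT g‖ ^ 2 * ‖u‖ ^ 2 := by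
  obtain ⟨S, hS, hu⟩ := spar_le_iff_exists_finset.1 hu
  obtain ⟨A, hAS, hA⟩ := S.exists_subset_card_eq (min_le_right k S.card)
  have hrest : (S \ A).card ≤ k := by
    rw [Finset.card_sdiff_of_subset hAS]
    omega
  refine (inner_sq_le_sum_sq_mul_norm_sq hu).trans ?_
  gcongr
  rw [← Finset.sum_sdiff hAS, two_mul]
  exact add_le_add (h.sum_sq_le_norm_sq g hrest)
    (h.sum_sq_le_norm_sq g (hA.trans_le (min_le_left k S.card)))

end HardThresholding

section ReciprocalThresholding

variable {d s : ℕ} {RT : EuclideanSpace ℝ (Fin d) → EuclideanSpace ℝ (Fin d)}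

/-- The scalar reciprocal thresholding rule that `IsRT` applies to the retained coordinates. -/
def recipThreshold (τ z : ℝ) : ℝ := Real.sign z * (|z| + √(z ^ 2 - τ ^ 2)) / 2

lemma recipThreshold_mul_sub {τ z : ℝ} (hz : |τ| ≤ |z|) :
    recipThreshold τ z * (z - recipThreshold τ z) = τ ^ 2 / 4 := by
  have hsqrt : √(z ^ 2 - τ ^ 2) ^ 2 = z ^ 2 - τ ^ 2 := Real.sq_sqrt (by linarith [sq_le_sq.2 hz])
  unfold recipThreshold
  rcases lt_trichotomy z 0 with h | rfl | h
  · rw [Real.sign_of_neg h, abs_of_neg h]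
    linear_combination -hsqrt / 4
  · have : τ = 0 := by simpa using hz
    simp [this]
  · rw [Real.sign_of_pos h, abs_of_pos h]
    linear_combination -hsqrt / 4

lemma abs_sub_recipThreshold_le {τ z : ℝ} (hτ : 0 ≤ τ) (hz : τ ≤ |z|) :
    |z - recipThreshold τ z| ≤ τ := by
  have hge : |z| - τ ≤ √(z ^ 2 - τ ^ 2) := by
    refine Real.le_sqrt_of_sq_le ?_
    rw [← sq_abs z]
    nlinarith
  have hle : √(z ^ 2 - τ ^ 2) ≤ |z| := by
    rw [← Real.sqrt_sq_eq_abs]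
    exact Real.sqrt_le_sqrt (by linarith [sq_nonneg τ])
  unfold recipThreshold
  rcases lt_trichotomy z 0 with h | rfl | h
  · rw [Real.sign_of_neg h, abs_le]
    rw [abs_of_neg h] at *
    constructor <;> linarith
  · simpa using hτ
  · rw [Real.sign_of_pos h, abs_le]
    rw [abs_of_pos h] at *
    constructor <;> linarith

lemma IsRT.spar_le (h : IsRT d s RT) (z : EuclideanSpace ℝ (Fin d)) : spar (RT z) ≤ s := by
  obtain ⟨S, hS, -, -, -, -, -, hoff⟩ := h z
  exact spar_le_iff_exists_finset.2 ⟨S, hS.trans_le (min_le_left s d), hoff⟩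

lemma IsRT.exists_residual_bounds (h : IsRT d s RT) (z : EuclideanSpace ℝ (Fin d)) :
    ∃ (S : Finset (Fin d)) (τ : ℝ), S.card = min s d ∧ (∀ i, |z i - RT z i| ≤ τ) ∧
      (∀ i ∈ S, RT z i * (z i - RT z i) = τ ^ 2 / 4) ∧ ∀ i ∉ S, RT z i = 0 := by
  obtain ⟨S, hS, hdom, τ, hτ, ⟨j, hj, rfl⟩, hon, hoff⟩ := h z
  refine ⟨S, |z j|, hS, fun i => ?_, fun i hi => ?_, hoff⟩
  · by_cases hi : i ∈ S
    · rw [hon i hi]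
      exact abs_sub_recipThreshold_le (abs_nonneg _) (hdom i hi j hj)
    · rw [hoff i hi, sub_zero]
      exact hτ i hi
  · rw [hon i hi]
    exact recipThreshold_mul_sub (by simpa using hdom i hi j hj)

lemma sum_mul_le_of_abs_le {ι : Type*} (U : Finset ι) (a : ι → ℝ) {b : ι → ℝ} {β τ : ℝ}
    (hβ : 0 < β) (hb : ∀ i, |b i| ≤ τ) :
    ∑ i ∈ U, a i * b i ≤ β * ∑ i ∈ U, a i ^ 2 + U.card * (τ ^ 2 / (4 * β)) := by
  rw [Finset.mul_sum, ← nsmul_eq_mul, ← Finset.sum_const, ← Finset.sum_add_distrib]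
  refine Finset.sum_le_sum fun i _ => ?_
  have hb2 : b i ^ 2 ≤ τ ^ 2 := sq_le_sq' (neg_le_of_abs_le (hb i)) (le_of_abs_le (hb i))
  rw [← sub_le_iff_le_add', le_div_iff₀ (by positivity)]
  nlinarith [sq_nonneg (2 * β * a i - b i)]

lemma sum_compl_sub_mul_sub_le {k : ℕ} {S U : Finset (Fin d)} {τ : ℝ}
    {x y z : EuclideanSpace ℝ (Fin d)} (hS : S.card = s) (hU : U.card ≤ k)
    (hy : ∀ i ∉ U, y i = 0) (hon : ∀ i ∈ S, x i * (z i - x i) = τ ^ 2 / 4)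
    (hoff : ∀ i ∉ S, x i = 0) :
    ∑ i ∈ Uᶜ, (y i - x i) * (z i - x i) ≤ -((s - k) * (τ ^ 2 / 4)) := by
  have hcard : (s - k : ℝ) ≤ (S \ U).card := by
    have := Finset.le_card_sdiff U S
    rw [hS] at this
    rw [sub_le_iff_le_add]
    exact_mod_cast (by omega : s ≤ (S \ U).card + k)
  calc ∑ i ∈ Uᶜ, (y i - x i) * (z i - x i)
      = ∑ i ∈ S \ U, -(τ ^ 2 / 4) := by
        refine (Finset.sum_subset_zero_on_sdiff (fun i hi => ?_) (fun i hi => ?_)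
          fun i hi => ?_).symm
        · exact Finset.mem_compl.2 (Finset.mem_sdiff.1 hi).2
        · simp only [Finset.mem_sdiff, Finset.mem_compl, not_and_not_right] at hi
          rw [hy i hi.1, hoff i fun hiS => hi.1 (hi.2 hiS), sub_zero, zero_mul]
        · rw [Finset.mem_sdiff] at hi
          rw [hy i hi.2, ← hon i hi.1]
          ring
    _ ≤ -((s - k) * (τ ^ 2 / 4)) := by
        rw [Finset.sum_const, nsmul_eq_mul, mul_neg]
        gcongr

lemma IsRT.inner_sub_le (h : IsRT d s RT) {k : ℕ} (hk : 0 < k) (hks : k < s) (hsd : s ≤ d)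
    {y : EuclideanSpace ℝ (Fin d)} (hy : spar y ≤ k) (z : EuclideanSpace ℝ (Fin d)) :
    ⟪y - RT z, z - RT z⟫ ≤ k / (s - k : ℝ) * ‖y - RT z‖ ^ 2 := by
  obtain ⟨U, hU, hyU⟩ := spar_le_iff_exists_finset.1 hy
  obtain ⟨S, τ, hS, hres, hon, hoff⟩ := h.exists_residual_bounds z
  have hk0 : (0 : ℝ) < k := mod_cast hk
  have hsk : (0 : ℝ) < s - k := sub_pos.2 (mod_cast hks)
  set β : ℝ := k / (s - k) with hβ
  have hβ0 : 0 < β := div_pos hk0 hsk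
  have hsupp : ∑ i ∈ U, (y i - RT z i) * (z i - RT z i) ≤
      β * ‖y - RT z‖ ^ 2 + (s - k) * (τ ^ 2 / 4) := by
    calc ∑ i ∈ U, (y i - RT z i) * (z i - RT z i)
        ≤ β * ∑ i ∈ U, (y i - RT z i) ^ 2 + U.card * (τ ^ 2 / (4 * β)) :=
          sum_mul_le_of_abs_le U _ hβ0 hres
      _ ≤ β * ‖y - RT z‖ ^ 2 + k * (τ ^ 2 / (4 * β)) := by
          rw [EuclideanSpace.real_norm_sq_eq]
          gcongr
          exact Finset.sum_le_sum_of_subset_of_nonneg U.subset_univ fun i _ _ => sq_nonneg _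
      _ = β * ‖y - RT z‖ ^ 2 + (s - k) * (τ ^ 2 / 4) := by
          rw [hβ]
          field_simp
  have hcompl : ∑ i ∈ Uᶜ, (y i - RT z i) * (z i - RT z i) ≤ -((s - k) * (τ ^ 2 / 4)) :=
    sum_compl_sub_mul_sub_le (hS.trans (min_eq_left hsd)) hU hyU hon hoff
  rw [inner_eq_sum_of_forall_notMem (S := Finset.univ) (by simp), ← Finset.sum_add_sum_compl U]
  simp only [PiLp.sub_apply]
  linarith

end ReciprocalThresholding

lemma norm_sq_step_le {d s k : ℕ} {HT RT : EuclideanSpace ℝ (Fin d) → EuclideanSpace ℝ (Fin d)}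
    (hHT : IsHT d s HT) (hRT : IsRT d s RT) (hk : 0 < k) (hks : k < s) (hsd : s ≤ d)
    {θstar θ : EuclideanSpace ℝ (Fin d)} (hstar : spar θstar ≤ k) (hθ : spar θ ≤ s)
    (g : EuclideanSpace ℝ (Fin d)) (η : ℝ) :
    (1 - 2 * (k / (s - k : ℝ))) * ‖RT (θ - η • g) - θstar‖ ^ 2 ≤
      ‖θ - θstar‖ ^ 2 - 2 * η * ⟪g, θ - θstar⟫ + 2 * η ^ 2 * ‖HT g‖ ^ 2 := by
  set p := RT (θ - η • g)
  have hconcave : ⟪θstar - p, (θ - p) - η • g⟫ ≤ k / (s - k : ℝ) * ‖p - θstar‖ ^ 2 := by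
    rw [sub_right_comm, norm_sub_rev p]
    exact hRT.inner_sub_le hk hks hsd hstar (θ - η • g)
  have hgrad : 2 * η * ⟪g, θ - p⟫ ≤ ‖θ - p‖ ^ 2 + 2 * η ^ 2 * ‖HT g‖ ^ 2 := by
    have hsparse : spar (θ - p) ≤ 2 * s := by
      rw [two_mul]
      exact (spar_sub_le θ p).trans (add_le_add hθ (hRT.spar_le _))
    refine (le_abs_self _).trans (abs_le_of_sq_le_sq ?_ (by positivity))
    have hcs := hHT.inner_sq_le g hsparse
    nlinarith [sq_nonneg (‖θ - p‖ ^ 2 - 2 * η ^ 2 * ‖HT g‖ ^ 2), sq_nonneg η]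
  have hpolar : 2 * ⟪θstar - p, θ - p⟫ = ‖p - θstar‖ ^ 2 + ‖θ - p‖ ^ 2 - ‖θ - θstar‖ ^ 2 := by
    rw [← sub_sub_sub_cancel_right θ θstar p, norm_sub_sq_real (θ - p), norm_sub_rev p θstar,
      real_inner_comm (θ - p)]
    ring
  have hsplit : ⟪θstar - p, g⟫ = ⟪g, θ - p⟫ - ⟪g, θ - θstar⟫ := by
    rw [← inner_sub_right, sub_sub_sub_cancel_left, real_inner_comm]
  rw [inner_sub_right, inner_smul_right, hsplit] at hconcave
  linarith

section LeastSquares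

variable {E W : Type*} [NormedAddCommGroup E] [InnerProductSpace ℝ E] [CompleteSpace E]
  [NormedAddCommGroup W] [InnerProductSpace ℝ W]

/-- The least-squares objective of a linear design `A` with response `y`; the usual normalization
by the sample size is absorbed into `A` and `y`. -/
def leastSquares (A : E →L[ℝ] W) (y : W) (θ : E) : ℝ := ‖y - A θ‖ ^ 2 / 2

/-- The Polyak step size of `f` at `x` for the target value `fstar`, with the gradient norm
measured after `Φ` and the factor `1 / 5` of the paper; it is `0` when `Φ` kills the gradient. -/
def polyakStep (Φ : E → E) (f : E → ℝ) (fstar : ℝ) (x : E) : ℝ :=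
  max (f x - fstar) 0 / (5 * ‖Φ (gradient f x)‖ ^ 2)

lemma polyakStep_nonneg (Φ : E → E) (f : E → ℝ) (fstar : ℝ) (x : E) :
    0 ≤ polyakStep Φ f fstar x :=
  div_nonneg (le_max_right _ _) (by positivity)

lemma polyakStep_of_le (Φ : E → E) {f : E → ℝ} {fstar : ℝ} {x : E} (h : f x ≤ fstar) :
    polyakStep Φ f fstar x = 0 := by
  rw [polyakStep, max_eq_right (sub_nonpos.2 h), zero_div]

lemma polyakStep_sq_mul_norm_sq (Φ : E → E) (f : E → ℝ) (fstar : ℝ) (x : E) :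
    polyakStep Φ f fstar x ^ 2 * ‖Φ (gradient f x)‖ ^ 2 =
      polyakStep Φ f fstar x * (f x - fstar) / 5 := by
  obtain h | h := le_total (f x) fstar
  · simp [polyakStep_of_le Φ h]
  · obtain hG | hG := eq_or_ne ‖Φ (gradient f x)‖ 0
    · simp [polyakStep, hG]
    · rw [polyakStep, max_eq_left (sub_nonneg.2 h)]
      field_simp

variable [CompleteSpace W]

lemma gradient_leastSquares (A : E →L[ℝ] W) (y : W) (θ : E) :
    gradient (leastSquares A y) θ = A.adjoint (A θ - y) := by
  have hfderiv := ((A.hasFDerivAt (x := θ)).const_sub y).norm_sq.mul_const (2⁻¹ : ℝ)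
  refine HasGradientAt.gradient (hasGradientAt_iff_hasFDerivAt.2 (hfderiv.congr_fderiv ?_))
  ext h
  simp [ContinuousLinearMap.adjoint_inner_left]

lemma leastSquares_sub_leastSquares (A : E →L[ℝ] W) (θstar : E) (e : W) (x : E) :
    leastSquares A (A θstar + e) x - leastSquares A (A θstar + e) θstar =
      ‖A (x - θstar)‖ ^ 2 / 2 - ⟪A.adjoint e, x - θstar⟫ := by
  have hres : A θstar + e - A x = e - A (x - θstar) := by
    rw [map_sub]
    abel
  rw [leastSquares, leastSquares, hres, add_sub_cancel_left, norm_sub_sq_real,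
    ContinuousLinearMap.adjoint_inner_left]
  ring

lemma gradient_leastSquares_add (A : E →L[ℝ] W) (θstar : E) (e : W) (x : E) :
    gradient (leastSquares A (A θstar + e)) x = A.adjoint (A (x - θstar)) - A.adjoint e := by
  rw [gradient_leastSquares, ← map_sub, map_sub A, sub_sub]

lemma inner_gradient_leastSquares (A : E →L[ℝ] W) (θstar : E) (e : W) (x : E) :
    ⟪gradient (leastSquares A (A θstar + e)) x, x - θstar⟫ =
      leastSquares A (A θstar + e) x - leastSquares A (A θstar + e) θstar +
        ‖A (x - θstar)‖ ^ 2 / 2 := by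
  rw [leastSquares_sub_leastSquares, gradient_leastSquares_add, inner_sub_left,
    ContinuousLinearMap.adjoint_inner_left, real_inner_self_eq_norm_sq]
  ring

end LeastSquares

section Deterministic

variable {d s k : ℕ} {HT RT : EuclideanSpace ℝ (Fin d) → EuclideanSpace ℝ (Fin d)}
  {W : Type*} [NormedAddCommGroup W] [InnerProductSpace ℝ W]
  {A : EuclideanSpace ℝ (Fin d) →L[ℝ] W} {e : W} {θstar x : EuclideanSpace ℝ (Fin d)}
  {μ L : ℝ}

/-- The quadratic form `‖A u‖²` lies between `μ ‖u‖²` and `L ‖u‖²` for all `k`-sparse `u`; this is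
the restricted strong convexity and smoothness of `leastSquares A y`. -/
def RestrictedEigenvalueBounds (A : EuclideanSpace ℝ (Fin d) →L[ℝ] W) (k : ℕ) (μ L : ℝ) : Prop :=
  ∀ u, spar u ≤ k → μ * ‖u‖ ^ 2 ≤ ‖A u‖ ^ 2 ∧ ‖A u‖ ^ 2 ≤ L * ‖u‖ ^ 2

lemma RestrictedEigenvalueBounds.mono {μ' L' : ℝ} (h : RestrictedEigenvalueBounds A k μ L)
    (hμ : μ' ≤ μ) (hL : L ≤ L') : RestrictedEigenvalueBounds A k μ' L' :=
  fun u hu => ⟨le_trans (by gcongr) (h u hu).1, (h u hu).2.trans (by gcongr)⟩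

lemma norm_sq_polyakStep_le [CompleteSpace W] (hHT : IsHT d s HT) (hRT : IsRT d s RT) (hk : 0 < k)
    (hks : k < s) (hsd : s ≤ d) (hstar : spar θstar ≤ k) (hx : spar x ≤ s)
    {f : EuclideanSpace ℝ (Fin d) → ℝ} (hf : f = leastSquares A (A θstar + e)) :
    (1 - 2 * (k / (s - k : ℝ))) *
        ‖RT (x - polyakStep HT f (f θstar) x • gradient f x) - θstar‖ ^ 2 ≤
      ‖x - θstar‖ ^ 2 - polyakStep HT f (f θstar) x *
        (8 / 5 * (f x - f θstar) + ‖A (x - θstar)‖ ^ 2) := by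
  refine (norm_sq_step_le hHT hRT hk hks hsd hstar hx _ _).trans_eq ?_
  have hinner : ⟪gradient f x, x - θstar⟫ = f x - f θstar + ‖A (x - θstar)‖ ^ 2 / 2 := by
    rw [hf, inner_gradient_leastSquares]
  rw [mul_assoc 2 (_ ^ 2), polyakStep_sq_mul_norm_sq, hinner]
  ring

lemma polyakStep_decrease_nonneg {f : EuclideanSpace ℝ (Fin d) → ℝ} {fstar q : ℝ} (hq : 0 ≤ q) :
    0 ≤ polyakStep HT f fstar x * (8 / 5 * (f x - fstar) + q) := by
  obtain h | h := le_total (f x) fstar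
  · rw [polyakStep_of_le HT h, zero_mul]
  · exact mul_nonneg (polyakStep_nonneg HT f fstar x) (by linarith)

lemma quarter_norm_sq_le_leastSquares_sub [CompleteSpace W]
    (hlow : μ * ‖x - θstar‖ ^ 2 ≤ ‖A (x - θstar)‖ ^ 2)
    (hnoise : |⟪A.adjoint e, x - θstar⟫| ≤ μ * ‖x - θstar‖ / 4 * ‖x - θstar‖) :
    ‖A (x - θstar)‖ ^ 2 / 4 ≤
      leastSquares A (A θstar + e) x - leastSquares A (A θstar + e) θstar := by
  rw [leastSquares_sub_leastSquares]
  linarith [le_of_abs_le hnoise]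

lemma IsHT.norm_gradient_leastSquares_le [CompleteSpace W] (hHT : IsHT d s HT)
    (hμ : 0 ≤ μ) (hμL : μ ≤ L) (hA : RestrictedEigenvalueBounds A (2 * s) μ L)
    (hx : spar (x - θstar) ≤ 2 * s)
    (hnoise : ∀ u, spar u ≤ 2 * s → |⟪A.adjoint e, u⟫| ≤ μ * ‖x - θstar‖ / 4 * ‖u‖) :
    ‖HT (gradient (leastSquares A (A θstar + e)) x)‖ ≤ 5 / 4 * (√L * ‖A (x - θstar)‖) := by
  set u := HT (gradient (leastSquares A (A θstar + e)) x) with hu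
  have husparse : spar u ≤ 2 * s := (hHT.spar_le _).trans (by omega)
  have hL : 0 ≤ L := hμ.trans hμL
  have hAu : ‖A u‖ ≤ √L * ‖u‖ := by
    rw [← Real.sqrt_sq (norm_nonneg u), ← Real.sqrt_mul hL]
    exact Real.le_sqrt_of_sq_le (hA u husparse).2
  have hμx : μ * ‖x - θstar‖ ≤ √L * ‖A (x - θstar)‖ := by
    refine le_of_sq_le_sq ?_ (by positivity)
    rw [mul_pow, mul_pow, Real.sq_sqrt hL, sq μ, mul_assoc]
    exact mul_le_mul hμL (hA _ hx).1 (by positivity) hL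
  have hself : ‖u‖ * ‖u‖ ≤ 5 / 4 * (√L * ‖A (x - θstar)‖) * ‖u‖ := by
    calc ‖u‖ * ‖u‖ = ⟪A (x - θstar), A u⟫ - ⟪A.adjoint e, u⟫ := by
          rw [← sq, ← hHT.inner_self, ← hu, gradient_leastSquares_add, inner_sub_left,
            ContinuousLinearMap.adjoint_inner_left]
      _ ≤ ‖A (x - θstar)‖ * (√L * ‖u‖) + μ * ‖x - θstar‖ / 4 * ‖u‖ := by
          rw [sub_eq_add_neg]
          exact add_le_add ((real_inner_le_norm _ _).trans (by gcongr))
            ((neg_le_abs _).trans (hnoise u husparse))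
      _ ≤ 5 / 4 * (√L * ‖A (x - θstar)‖) * ‖u‖ := by
          nlinarith [norm_nonneg u]
  obtain h0 | hpos := (norm_nonneg u).eq_or_lt
  · rw [← h0]
    positivity
  · exact le_of_mul_le_mul_right hself hpos

lemma le_polyakStep_leastSquares [CompleteSpace W] (hHT : IsHT d s HT) (hμ : 0 < μ) (hμL : μ ≤ L)
    (hA : RestrictedEigenvalueBounds A (2 * s) μ L) (hx : spar (x - θstar) ≤ 2 * s)
    (hne : x ≠ θstar)
    (hnoise : ∀ u, spar u ≤ 2 * s → |⟪A.adjoint e, u⟫| ≤ μ * ‖x - θstar‖ / 4 * ‖u‖)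
    {f : EuclideanSpace ℝ (Fin d) → ℝ} (hf : f = leastSquares A (A θstar + e)) :
    4 / (125 * L) ≤ polyakStep HT f (f θstar) x := by
  have hxpos : 0 < ‖x - θstar‖ := norm_sub_pos_iff.2 hne
  have hq : 0 < ‖A (x - θstar)‖ ^ 2 := lt_of_lt_of_le (by positivity) (hA _ hx).1
  have hgap : ‖A (x - θstar)‖ ^ 2 / 4 ≤ f x - f θstar := by
    rw [hf]
    exact quarter_norm_sq_le_leastSquares_sub (hA _ hx).1 (hnoise _ hx)
  have hL : 0 < L := hμ.trans_le hμL
  have hG : ‖HT (gradient f x)‖ ^ 2 ≤ 25 / 16 * (L * ‖A (x - θstar)‖ ^ 2) := by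
    rw [hf]
    refine (pow_le_pow_left₀ (norm_nonneg _)
      (hHT.norm_gradient_leastSquares_le hμ.le hμL hA hx hnoise) 2).trans_eq ?_
    rw [mul_pow, mul_pow, Real.sq_sqrt hL.le]
    ring
  have hGpos : 0 < ‖HT (gradient f x)‖ ^ 2 := by
    have hinner : 0 < ⟪gradient f x, x - θstar⟫ := by
      rw [hf] at hgap ⊢
      rw [inner_gradient_leastSquares]
      linarith
    have := (pow_pos hinner 2).trans_le (hHT.inner_sq_le (gradient f x) hx)
    exact pos_of_mul_pos_right (by linarith : 0 < ‖x - θstar‖ ^ 2 * 2 * _ ) (by positivity)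
  rw [polyakStep, max_eq_left (by linarith), div_le_div_iff₀ (by positivity) (by positivity)]
  nlinarith

lemma div_sub_le_of_mul_le {κ : ℝ} (hκ : 1 ≤ κ) (hk : 0 < k) (hs : 320 * κ * k ≤ s) :
    (k / (s - k : ℝ)) ≤ 1 / (319 * κ) := by
  have : (0 : ℝ) < k := mod_cast hk
  have hsk : 319 * κ * k ≤ s - k := by nlinarith
  rw [div_le_div_iff₀ (lt_of_lt_of_le (by positivity) hsk) (by positivity)]
  linarith

lemma le_contraction_of_mul_le {κ γ a p : ℝ} (hκ : 1 ≤ κ) (hγ : γ ≤ 1 / (319 * κ)) (ha : 0 ≤ a)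
    (h : (1 - 2 * γ) * p ≤ a - a / (25 * κ)) : p ≤ (1 - 1 / (80 * κ)) * a := by
  have hκ0 : 0 < κ := by linarith
  obtain ⟨x, hx⟩ : ∃ x, x = 1 / κ := ⟨_, rfl⟩
  have hx0 : 0 < x := hx ▸ by positivity
  have hx1 : x ≤ 1 := hx ▸ (div_le_one hκ0).2 hκ
  rw [show 1 / (319 * κ) = x / 319 by rw [hx]; field_simp] at hγ
  rw [show a / (25 * κ) = a * x / 25 by rw [hx]; field_simp] at h
  rw [show 1 / (80 * κ) = x / 80 by rw [hx]; field_simp]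
  refine le_of_mul_le_mul_left (h.trans ?_) (by linarith : 0 < 1 - 2 * γ)
  calc a - a * x / 25 ≤ (1 - 2 * (x / 319)) * ((1 - x / 80) * a) := by
        nlinarith [mul_nonneg ha hx0.le, mul_nonneg ha (sq_nonneg x)]
    _ ≤ (1 - 2 * γ) * ((1 - x / 80) * a) := by
        have : 0 ≤ 1 - x / 80 := by linarith
        gcongr

lemma le_expansion_of_mul_le {κ γ a p : ℝ} (hκ : 1 ≤ κ) (hγ : γ ≤ 1 / (319 * κ)) (ha : 0 ≤ a)
    (h : (1 - 2 * γ) * p ≤ a) : p ≤ (1 + 1 / (80 * κ)) * a := by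
  have hκ0 : 0 < κ := by linarith
  obtain ⟨x, hx⟩ : ∃ x, x = 1 / κ := ⟨_, rfl⟩
  have hx0 : 0 < x := hx ▸ by positivity
  have hx1 : x ≤ 1 := hx ▸ (div_le_one hκ0).2 hκ
  rw [show 1 / (319 * κ) = x / 319 by rw [hx]; field_simp] at hγ
  rw [show 1 / (80 * κ) = x / 80 by rw [hx]; field_simp]
  refine le_of_mul_le_mul_left (h.trans ?_) (by linarith : 0 < 1 - 2 * γ)
  calc a ≤ (1 - 2 * (x / 319)) * ((1 + x / 80) * a) := by
        nlinarith [mul_nonneg ha (mul_nonneg hx0.le (sub_nonneg.2 hx1)), mul_nonneg ha hx0.le]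
    _ ≤ (1 - 2 * γ) * ((1 + x / 80) * a) := by gcongr

lemma norm_sq_polyakStep_contracts [CompleteSpace W] (hHT : IsHT d s HT) (hRT : IsRT d s RT)
    (hk : 0 < k) (hks : k < s) (hsd : s ≤ d) (hμ : 0 < μ) (hμL : μ ≤ L)
    (hs : 320 * (L / μ) * k ≤ s) (hA : RestrictedEigenvalueBounds A (2 * s) μ L)
    (hstar : spar θstar ≤ k) (hx : spar x ≤ s) (hne : x ≠ θstar)
    (hnoise : ∀ u, spar u ≤ 2 * s → |⟪A.adjoint e, u⟫| ≤ μ * ‖x - θstar‖ / 4 * ‖u‖)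
    {f : EuclideanSpace ℝ (Fin d) → ℝ} (hf : f = leastSquares A (A θstar + e)) :
    ‖RT (x - polyakStep HT f (f θstar) x • gradient f x) - θstar‖ ^ 2 ≤
      (1 - 1 / (80 * (L / μ))) * ‖x - θstar‖ ^ 2 := by
  have hκ : 1 ≤ L / μ := (one_le_div hμ).2 hμL
  have hL : 0 < L := hμ.trans_le hμL
  have hsub : spar (x - θstar) ≤ 2 * s := by
    have := spar_sub_le x θstar
    omega
  have hlow := (hA _ hsub).1
  have hgap : ‖A (x - θstar)‖ ^ 2 / 4 ≤ f x - f θstar := by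
    rw [hf]
    exact quarter_norm_sq_le_leastSquares_sub hlow (hnoise _ hsub)
  have hdecrease : ‖x - θstar‖ ^ 2 / (25 * (L / μ)) ≤ polyakStep HT f (f θstar) x *
      (8 / 5 * (f x - f θstar) + ‖A (x - θstar)‖ ^ 2) := by
    calc ‖x - θstar‖ ^ 2 / (25 * (L / μ))
        = 4 / (125 * L) * (5 / 4 * (μ * ‖x - θstar‖ ^ 2)) := by
          field_simp
          ring
      _ ≤ _ := by
        refine mul_le_mul (le_polyakStep_leastSquares hHT hμ hμL hA hsub hne hnoise hf) ?_
          (by positivity) (polyakStep_nonneg HT f _ x)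
        linarith [sq_nonneg ‖A (x - θstar)‖]
  refine le_contraction_of_mul_le hκ (div_sub_le_of_mul_le hκ hk hs) (sq_nonneg _) ?_
  linarith [norm_sq_polyakStep_le hHT hRT hk hks hsd hstar hx hf]

lemma norm_sq_polyakStep_le_expansion [CompleteSpace W] (hHT : IsHT d s HT) (hRT : IsRT d s RT)
    (hk : 0 < k) (hks : k < s) (hsd : s ≤ d) {κ : ℝ} (hκ : 1 ≤ κ) (hs : 320 * κ * k ≤ s)
    (hstar : spar θstar ≤ k) (hx : spar x ≤ s)
    {f : EuclideanSpace ℝ (Fin d) → ℝ} (hf : f = leastSquares A (A θstar + e)) :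
    ‖RT (x - polyakStep HT f (f θstar) x • gradient f x) - θstar‖ ^ 2 ≤
      (1 + 1 / (80 * κ)) * ‖x - θstar‖ ^ 2 :=
  le_expansion_of_mul_le hκ (div_sub_le_of_mul_le hκ hk hs) (sq_nonneg _)
    ((norm_sq_polyakStep_le hHT hRT hk hks hsd hstar hx hf).trans
      (sub_le_self _ (polyakStep_decrease_nonneg (sq_nonneg _))))

lemma le_of_forall_trapped {a : ℕ → ℝ} {R R' : ℝ} (hbelow : ∀ t, a t < R → a (t + 1) ≤ R')
    (habove : ∀ t, R ≤ a t → a (t + 1) ≤ a t) {T : ℕ} (hT : a T ≤ R') {t : ℕ} (ht : T ≤ t) :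
    a t ≤ R' := by
  induction t, ht using Nat.le_induction with
  | base => exact hT
  | succ t _ ih => exact (lt_or_ge (a t) R).elim (hbelow t) fun h => (habove t h).trans ih

lemma abs_inner_adjoint_le_of_coord_le [CompleteSpace W] {l r R : ℝ} (hμ : 0 ≤ μ) (hl0 : 0 ≤ l)
    (hl : 32 * s * l ^ 2 ≤ μ ^ 2 * R) (hR : R ≤ r ^ 2) (hr : 0 ≤ r)
    (hcoord : ∀ i, |A.adjoint e i| ≤ l) {u : EuclideanSpace ℝ (Fin d)} (hu : spar u ≤ 2 * s) :
    |⟪A.adjoint e, u⟫| ≤ μ * r / 4 * ‖u‖ := by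
  refine (abs_inner_le_of_spar_le hcoord hu hl0).trans ?_
  gcongr
  refine le_of_sq_le_sq ?_ (by positivity)
  rw [mul_pow, Real.sq_sqrt (Nat.cast_nonneg _)]
  push_cast
  nlinarith [mul_le_mul_of_nonneg_left hR (sq_nonneg μ)]

theorem polyak_reciprocal_thresholding_converges [CompleteSpace W] (hHT : IsHT d s HT)
    (hRT : IsRT d s RT) (hk : 0 < k) (hks : k < s) (hsd : s ≤ d) (hμ : 0 < μ) (hμL : μ ≤ L)
    (hs : 320 * (L / μ) * k ≤ s) (hA : RestrictedEigenvalueBounds A (2 * s) μ L)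
    {l R : ℝ} (hl0 : 0 ≤ l) (hcoord : ∀ i, |A.adjoint e i| ≤ l) (hl : 32 * s * l ^ 2 ≤ μ ^ 2 * R)
    (hR : 0 < R) (hstar : spar θstar ≤ k) {f : EuclideanSpace ℝ (Fin d) → ℝ}
    (hf : f = leastSquares A (A θstar + e)) {θ : ℕ → EuclideanSpace ℝ (Fin d)}
    (hθ0 : spar (θ 0) ≤ s)
    (hθ : ∀ t, θ (t + 1) = RT (θ t - polyakStep HT f (f θstar) (θ t) • gradient f (θ t))) :
    (∀ t, R ≤ ‖θ t - θstar‖ ^ 2 →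
      ‖θ (t + 1) - θstar‖ ^ 2 ≤ (1 - 1 / (80 * (L / μ))) * ‖θ t - θstar‖ ^ 2) ∧
    ∀ T, ‖θ T - θstar‖ ^ 2 < R →
      ∀ t, T ≤ t → ‖θ t - θstar‖ ^ 2 ≤ (1 + 1 / (80 * (L / μ))) * R := by
  have hκ : 1 ≤ L / μ := (one_le_div hμ).2 hμL
  have : 0 < L / μ := one_pos.trans_le hκ
  have hsparse : ∀ t, spar (θ t) ≤ s
    | 0 => hθ0
    | t + 1 => hθ t ▸ hRT.spar_le _
  have hcontract : ∀ t, R ≤ ‖θ t - θstar‖ ^ 2 →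
      ‖θ (t + 1) - θstar‖ ^ 2 ≤ (1 - 1 / (80 * (L / μ))) * ‖θ t - θstar‖ ^ 2 := by
    intro t ht
    have hne : θ t ≠ θstar := fun h => by
      rw [h, sub_self, norm_zero] at ht
      linarith
    rw [hθ t]
    exact norm_sq_polyakStep_contracts hHT hRT hk hks hsd hμ hμL hs hA hstar (hsparse t) hne
      (fun u hu => abs_inner_adjoint_le_of_coord_le hμ.le hl0 hl ht (norm_nonneg _) hcoord hu) hf
  refine ⟨hcontract, fun T hT t ht => le_of_forall_trapped (a := fun t => ‖θ t - θstar‖ ^ 2)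
    (fun t ht => ?_) (fun t ht => (hcontract t ht).trans ?_) ?_ ht⟩
  · rw [hθ t]
    refine (norm_sq_polyakStep_le_expansion hHT hRT hk hks hsd hκ hs hstar (hsparse t) hf).trans ?_
    gcongr
  · exact mul_le_of_le_one_left (sq_nonneg _) (sub_le_self _ (by positivity))
  · exact hT.le.trans (le_mul_of_one_le_left hR.le (le_add_of_nonneg_right (by positivity)))

end Deterministic

open scoped NNReal

section ChiSquare

lemma gaussianPDFReal_mul_exp_mul_sq (l x : ℝ) :
    gaussianPDFReal 0 1 x * Real.exp (l * x ^ 2) =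
      (√(2 * Real.pi))⁻¹ * Real.exp (-(1 / 2 - l) * x ^ 2) := by
  simp only [gaussianPDFReal, NNReal.coe_one, mul_one, sub_zero, mul_assoc]
  rw [← Real.exp_add]
  ring_nf

lemma integrable_exp_mul_sq_gaussianReal {l : ℝ} (hl : l < 1 / 2) :
    Integrable (fun x => Real.exp (l * x ^ 2)) (gaussianReal 0 1) := by
  rw [gaussianReal_of_var_ne_zero _ one_ne_zero, integrable_withDensity_iff_integrable_smul₀'
    (by fun_prop) (ae_of_all _ fun _ => gaussianPDF_lt_top)]
  simp only [toReal_gaussianPDF, smul_eq_mul, gaussianPDFReal_mul_exp_mul_sq]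
  exact (integrable_exp_neg_mul_sq (sub_pos.2 hl)).const_mul _

lemma integral_exp_mul_sq_gaussianReal {l : ℝ} (hl : l < 1 / 2) :
    ∫ x, Real.exp (l * x ^ 2) ∂gaussianReal 0 1 = (√(1 - 2 * l))⁻¹ := by
  have hpos : 0 < 1 - 2 * l := by linarith
  rw [integral_gaussianReal_eq_integral_smul one_ne_zero]
  simp only [smul_eq_mul, gaussianPDFReal_mul_exp_mul_sq]
  rw [integral_const_mul, integral_gaussian, ← Real.sqrt_inv, ← Real.sqrt_inv,
    ← Real.sqrt_mul (by positivity), show 1 / 2 - l = (1 - 2 * l) / 2 by ring]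
  field_simp

lemma inv_one_sub_le_exp {x : ℝ} (hx : |x| ≤ 1 / 2) : (1 - x)⁻¹ ≤ Real.exp (x + x ^ 2) := by
  have : -(1 / 2) ≤ x := (abs_le.1 hx).1
  have hup : x ≤ 1 / 2 := (abs_le.1 hx).2
  rw [inv_le_iff_one_le_mul₀ (by linarith)]
  obtain h | h := le_total 0 x
  · have hexp := Real.quadratic_le_exp_of_nonneg (x := x + x ^ 2) (by positivity)
    refine le_trans ?_ (mul_le_mul_of_nonneg_right hexp (by linarith))
    nlinarith [pow_nonneg h 2, pow_nonneg h 3, mul_nonneg (pow_nonneg h 2) (sub_nonneg.2 hup),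
      mul_nonneg (pow_nonneg h 3) (sub_nonneg.2 hup),
      mul_nonneg (pow_nonneg h 4) (sub_nonneg.2 hup)]
  · refine le_trans ?_ (mul_le_mul_of_nonneg_right (Real.add_one_le_exp (x + x ^ 2)) (by linarith))
    nlinarith [pow_nonneg (neg_nonneg.2 h) 3]

lemma integral_exp_mul_sq_gaussianReal_le {l : ℝ} (hl : |l| ≤ 1 / 4) :
    ∫ x, Real.exp (l * x ^ 2) ∂gaussianReal 0 1 ≤ Real.exp (l + 2 * l ^ 2) := by
  rw [integral_exp_mul_sq_gaussianReal (by linarith [le_of_abs_le hl]), ← Real.sqrt_inv,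
    Real.sqrt_le_left (Real.exp_pos _).le, ← Real.exp_nat_mul]
  refine (inv_one_sub_le_exp (x := 2 * l) ?_).trans_eq ?_
  · rw [abs_mul, abs_two]
    linarith
  · push_cast
    ring_nf

variable {ι : Type*} [Fintype ι]

lemma exp_mul_sum_sq (l : ℝ) :
    (fun y : ι → ℝ => Real.exp (l * ∑ i, y i ^ 2)) = fun y => ∏ i, Real.exp (l * y i ^ 2) := by
  simp only [Finset.mul_sum, Real.exp_sum]

lemma integrable_exp_mul_sum_sq {l : ℝ} (hl : l < 1 / 2) :
    Integrable (fun y : ι → ℝ => Real.exp (l * ∑ i, y i ^ 2))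
      (Measure.pi fun _ => gaussianReal 0 1) := by
  rw [exp_mul_sum_sq]
  exact Integrable.fintype_prod fun _ => integrable_exp_mul_sq_gaussianReal hl

lemma mgf_sum_sq_le {l : ℝ} (hl : |l| ≤ 1 / 4) :
    mgf (fun y : ι → ℝ => ∑ i, y i ^ 2) (Measure.pi fun _ => gaussianReal 0 1) l ≤
      Real.exp (Fintype.card ι * (l + 2 * l ^ 2)) := by
  rw [mgf, exp_mul_sum_sq, integral_fintype_prod_eq_pow (f := fun x : ℝ => Real.exp (l * x ^ 2)),
    Real.exp_nat_mul]
  exact pow_le_pow_left₀ (integral_nonneg fun x => (Real.exp_pos _).le)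
    (integral_exp_mul_sq_gaussianReal_le hl) _

lemma measureReal_sum_sq_ge_le {t : ℝ} (h0 : 0 ≤ t) (h1 : t ≤ 1) :
    (Measure.pi fun _ => gaussianReal 0 1).real
        {y : ι → ℝ | Fintype.card ι * (1 + t) ≤ ∑ i, y i ^ 2} ≤
      Real.exp (-(Fintype.card ι * t ^ 2 / 8)) := by
  have hl : |t / 4| ≤ 1 / 4 := abs_le.2 ⟨by linarith, by linarith⟩
  refine (measure_ge_le_exp_mul_mgf _ (by positivity : 0 ≤ t / 4)
    (integrable_exp_mul_sum_sq (by linarith))).trans ?_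
  refine (mul_le_mul_of_nonneg_left (mgf_sum_sq_le hl) (Real.exp_pos _).le).trans_eq ?_
  rw [← Real.exp_add]
  ring_nf

lemma measureReal_sum_sq_le_le {t : ℝ} (h0 : 0 ≤ t) (h1 : t ≤ 1) :
    (Measure.pi fun _ => gaussianReal 0 1).real
        {y : ι → ℝ | ∑ i, y i ^ 2 ≤ Fintype.card ι * (1 - t)} ≤
      Real.exp (-(Fintype.card ι * t ^ 2 / 8)) := by
  have hl : |-(t / 4)| ≤ 1 / 4 := abs_le.2 ⟨by linarith, by linarith⟩
  refine (measure_le_le_exp_mul_mgf _ (by linarith : -(t / 4) ≤ 0)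
    (integrable_exp_mul_sum_sq (by linarith))).trans ?_
  refine (mul_le_mul_of_nonneg_left (mgf_sum_sq_le hl) (Real.exp_pos _).le).trans_eq ?_
  rw [← Real.exp_add]
  ring_nf

lemma measureReal_lt_abs_sum_sq_sub_card_le {t : ℝ} (h0 : 0 ≤ t) (h1 : t ≤ 1) :
    (Measure.pi fun _ => gaussianReal 0 1).real
        {y : ι → ℝ | Fintype.card ι * t < |∑ i, y i ^ 2 - Fintype.card ι|} ≤
      2 * Real.exp (-(Fintype.card ι * t ^ 2 / 8)) := by
  have hsub : {y : ι → ℝ | Fintype.card ι * t < |∑ i, y i ^ 2 - Fintype.card ι|} ⊆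
      {y | Fintype.card ι * (1 + t) ≤ ∑ i, y i ^ 2} ∪
        {y | ∑ i, y i ^ 2 ≤ Fintype.card ι * (1 - t)} := by
    intro y hy
    simp only [Set.mem_ofPred_eq, lt_abs] at hy
    obtain hy | hy := hy
    · left
      rw [Set.mem_ofPred_eq]
      linarith
    · right
      rw [Set.mem_ofPred_eq]
      linarith
  rw [two_mul]
  exact (measureReal_mono hsub).trans ((measureReal_union_le _ _).trans
    (add_le_add (measureReal_sum_sq_ge_le h0 h1) (measureReal_sum_sq_le_le h0 h1)))

lemma map_const_mul_pi_gaussianReal (v : ℝ≥0) :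
    (Measure.pi fun _ : ι => gaussianReal 0 1).map (fun y i => √v * y i) =
      Measure.pi fun _ => gaussianReal 0 v := by
  rw [Measure.pi_map_pi (f := fun _ x => √v * x) fun _ => by fun_prop]
  congr with _ : 1
  rw [gaussianReal_map_const_mul, mul_zero, mul_one]
  congr
  exact Real.sq_sqrt v.2

lemma measureReal_lt_abs_sum_sq_sub_le (v : ℝ≥0) {t : ℝ} (h0 : 0 ≤ t) (h1 : t ≤ 1) :
    (Measure.pi fun _ => gaussianReal 0 v).real
        {y : ι → ℝ | Fintype.card ι * t * v < |∑ i, y i ^ 2 - Fintype.card ι * v|} ≤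
      2 * Real.exp (-(Fintype.card ι * t ^ 2 / 8)) := by
  rw [← map_const_mul_pi_gaussianReal, map_measureReal_apply (by fun_prop)
    (measurableSet_lt (by fun_prop) (by fun_prop))]
  refine (measureReal_mono fun y hy => ?_).trans (measureReal_lt_abs_sum_sq_sub_card_le h0 h1)
  simp only [Set.mem_preimage, Set.mem_ofPred_eq, mul_pow, Real.sq_sqrt v.coe_nonneg,
    ← Finset.mul_sum, mul_comm _ (v : ℝ), ← mul_sub, abs_mul, NNReal.abs_eq] at hy
  exact lt_of_mul_lt_mul_left hy v.2

end ChiSquare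

section LinearForm

lemma map_inner_toLp_pi_gaussianReal {ι : Type*} [Fintype ι] (a : EuclideanSpace ℝ ι) :
    (Measure.pi fun _ => gaussianReal 0 1).map (fun g : ι → ℝ => ⟪a, WithLp.toLp 2 g⟫) =
      gaussianReal 0 (‖a‖₊ ^ 2) := by
  have hcomp : (fun g : ι → ℝ => ⟪a, WithLp.toLp 2 g⟫) = innerSL ℝ a ∘ WithLp.toLp 2 := rfl
  rw [hcomp, ← Measure.map_map (by fun_prop) (by fun_prop), map_pi_eq_stdGaussian,
    IsGaussian.map_eq_gaussianReal, integral_strongDual_stdGaussian, variance_dual_stdGaussian,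
    innerSL_apply_norm, Real.toNNReal_pow (norm_nonneg _), norm_toNNReal]

variable {n d : ℕ}

/-- The law of a standard Gaussian design matrix together with an independent standard Gaussian
noise vector. -/
abbrev designNoiseMeasure (n d : ℕ) : Measure ((Fin n → Fin d → ℝ) × (Fin n → ℝ)) :=
  (Measure.pi fun _ => Measure.pi fun _ => gaussianReal 0 1).prod
    (Measure.pi fun _ => gaussianReal 0 1)

/-- The response `Z v + b z` of the design matrix `Z = ω.1` and the noise `z = ω.2` to a
coefficient vector `v` at noise level `b`. -/
def response (ω : (Fin n → Fin d → ℝ) × (Fin n → ℝ)) (v : EuclideanSpace ℝ (Fin d)) (b : ℝ) :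
    EuclideanSpace ℝ (Fin n) :=
  Matrix.toEuclideanLin (Matrix.of ω.1) v + b • WithLp.toLp 2 ω.2

lemma response_apply (ω : (Fin n → Fin d → ℝ) × (Fin n → ℝ)) (v : EuclideanSpace ℝ (Fin d))
    (b : ℝ) (i : Fin n) : response ω v b i = ⟪v, WithLp.toLp 2 (ω.1 i)⟫ + b * ω.2 i := by
  simp [response, Matrix.mulVec, dotProduct, PiLp.inner_apply]

lemma map_response (v : EuclideanSpace ℝ (Fin d)) (b : ℝ) :
    (designNoiseMeasure n d).map (fun ω i => response ω v b i) =
      Measure.pi fun _ => gaussianReal 0 (‖v‖₊ ^ 2 + ‖b‖₊ ^ 2) := by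
  simp only [response_apply]
  rw [designNoiseMeasure, ← (measurePreserving_arrowProdEquivProdArrow (Fin d → ℝ) ℝ (Fin n)
    (fun _ => Measure.pi fun _ => gaussianReal 0 1) fun _ => gaussianReal 0 1).map_eq,
    Measure.map_map (by fun_prop) (MeasurableEquiv.measurable _)]
  refine (Measure.pi_map_pi (f := fun _ (p : (Fin d → ℝ) × ℝ) => ⟪v, WithLp.toLp 2 p.1⟫ + b * p.2)
    (fun _ => by fun_prop)).trans ?_
  congr with _ : 1
  have hcomp : (fun p : (Fin d → ℝ) × ℝ => ⟪v, WithLp.toLp 2 p.1⟫ + b * p.2) =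
      (fun p : ℝ × ℝ => p.1 + p.2) ∘ Prod.map (fun g => ⟪v, WithLp.toLp 2 g⟫) (b * ·) := rfl
  rw [hcomp, ← Measure.map_map (by fun_prop) (by fun_prop),
    ← Measure.map_prod_map _ _ (by fun_prop) (by fun_prop), map_inner_toLp_pi_gaussianReal,
    gaussianReal_map_const_mul]
  refine (gaussianReal_conv_gaussianReal).trans ?_
  congr 1
  · simp
  · ext
    simp

/-- The squared length of the response to `(v, b)` is within a factor `1 ± t` of its mean. -/
def Concentrates (ω : (Fin n → Fin d → ℝ) × (Fin n → ℝ)) (v : EuclideanSpace ℝ (Fin d))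
    (b t : ℝ) : Prop :=
  |‖response ω v b‖ ^ 2 - n * (‖v‖ ^ 2 + b ^ 2)| ≤ n * t * (‖v‖ ^ 2 + b ^ 2)

lemma measureReal_not_concentrates_le (v : EuclideanSpace ℝ (Fin d)) (b : ℝ) {t : ℝ}
    (h0 : 0 ≤ t) (h1 : t ≤ 1) :
    (designNoiseMeasure n d).real {ω | ¬ Concentrates ω v b t} ≤
      2 * Real.exp (-(n * t ^ 2 / 8)) := by
  have htail := measureReal_lt_abs_sum_sq_sub_le (ι := Fin n) (‖v‖₊ ^ 2 + ‖b‖₊ ^ 2) h0 h1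
  rw [← map_response v b, map_measureReal_apply ?_
    (measurableSet_lt (by fun_prop) (by fun_prop))] at htail
  · simpa [Concentrates, EuclideanSpace.real_norm_sq_eq] using htail
  · simp only [response_apply]
    fun_prop

end LinearForm

section SparseGrid

/-- The integer points of the cube `[-M, M]^κ` with at most `k` nonzero coordinates. -/
def sparseGrid (κ : Type*) [Fintype κ] [DecidableEq κ] (M k : ℕ) : Finset (κ → ℤ) :=
  {z ∈ Fintype.piFinset fun _ => Finset.Icc (-(M : ℤ)) M | Finset.card {j | z j ≠ 0} ≤ k}

variable {κ : Type*} [Fintype κ] [DecidableEq κ] {M k : ℕ}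

lemma mem_sparseGrid {z : κ → ℤ} :
    z ∈ sparseGrid κ M k ↔ (∀ j, -(M : ℤ) ≤ z j ∧ z j ≤ M) ∧ Finset.card {j | z j ≠ 0} ≤ k := by
  simp [sparseGrid]

lemma exists_eq_sum_single_of_mem_sparseGrid [Nonempty κ] {z : κ → ℤ}
    (hz : z ∈ sparseGrid κ M k) :
    ∃ p : Fin k → κ × Finset.Icc (-(M : ℤ)) M, ∑ i, Pi.single (p i).1 ((p i).2 : ℤ) = z := by
  rw [mem_sparseGrid] at hz
  obtain ⟨g⟩ : Nonempty ({j // z j ≠ 0} ↪ Fin k) :=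
    Function.Embedding.nonempty_of_card_le (by simpa [Fintype.card_subtype] using hz.2)
  refine ⟨Function.extend g (fun j => (j, ⟨z j, Finset.mem_Icc.2 (hz.1 j)⟩))
    fun _ => (Classical.arbitrary κ, ⟨0, by simp⟩), ?_⟩
  calc _ = ∑ j : {j // z j ≠ 0}, Pi.single (j : κ) (z j) :=
        (Fintype.sum_of_injective g g.injective _ _
          (fun i hi => by simp [Function.extend_apply' _ _ _ hi])
          fun j => by simp [g.injective.extend_apply]).symm
    _ = ∑ j with z j ≠ 0, Pi.single j (z j) :=
        (Finset.sum_subtype _ (fun _ => Finset.mem_filter_univ _)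
          fun j => Pi.single j (z j)).symm
    _ = ∑ j, Pi.single j (z j) :=
        Finset.sum_filter_of_ne fun j _ hj h => hj (by rw [h, Pi.single_zero])
    _ = z := Finset.univ_sum_single z

lemma card_sparseGrid_le [Nonempty κ] :
    Finset.card (sparseGrid κ M k) ≤ (Fintype.card κ * (2 * M + 1)) ^ k := by
  have hsub : sparseGrid κ M k ⊆ Finset.univ.image
      fun p : Fin k → κ × Finset.Icc (-(M : ℤ)) M => ∑ i, Pi.single (p i).1 ((p i).2 : ℤ) := by
    intro z hz
    simpa using exists_eq_sum_single_of_mem_sparseGrid hz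
  refine (Finset.card_le_card hsub).trans (Finset.card_image_le.trans_eq ?_)
  simp only [Finset.card_univ, Fintype.card_pi, Fintype.card_prod, Fintype.card_coe, Int.card_Icc,
    Finset.prod_const, Fintype.card_fin]
  congr
  omega

lemma single_one_mem_sparseGrid (hM : 1 ≤ M) (hk : 1 ≤ k) (j : κ) :
    Pi.single j 1 ∈ sparseGrid κ M k := by
  refine mem_sparseGrid.2 ⟨fun i => ?_, ?_⟩
  · rcases eq_or_ne i j with rfl | hij
    · simp only [Pi.single_eq_same]
      omega
    · simp [Pi.single_eq_of_ne hij]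
  · refine (Finset.card_le_one.2 fun a ha b hb => ?_).trans hk
    simp only [Finset.mem_filter_univ, Pi.single_apply, ne_eq, ite_eq_right_iff, one_ne_zero,
      imp_false, not_not] at ha hb
    rw [ha, hb]

lemma exists_mem_sparseGrid_forall_abs_sub_le (hM : 0 < M) {v : κ → ℝ} {r : ℝ} (hr : 0 < r)
    (hv : ∀ j, |v j| ≤ r) (hk : Finset.card {j | v j ≠ 0} ≤ k) :
    ∃ z ∈ sparseGrid κ M k, ∀ j, |v j - r / M * z j| ≤ r / M := by
  have : (0 : ℝ) < M := by exact_mod_cast hM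
  refine ⟨fun j => ⌊v j * M / r⌋, mem_sparseGrid.2 ⟨fun j => ?_, ?_⟩, fun j => ?_⟩
  · obtain ⟨hlow, hup⟩ := abs_le.1 (hv j)
    constructor
    · rw [Int.le_floor, le_div_iff₀ hr]
      push_cast
      nlinarith
    · suffices (⌊v j * M / r⌋ : ℝ) ≤ M by exact_mod_cast this
      refine (Int.floor_le _).trans ?_
      rw [div_le_iff₀ hr]
      nlinarith
  · refine (Finset.card_le_card fun j hj => ?_).trans hk
    rw [Finset.mem_filter_univ] at hj ⊢
    contrapose! hj
    simp [hj]
  · have hfract : v j - r / M * ⌊v j * M / r⌋ = r / M * Int.fract (v j * M / r) := by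
      rw [Int.fract]
      field_simp
    rw [hfract, abs_of_nonneg (by positivity)]
    exact mul_le_of_le_one_right (by positivity) (Int.fract_lt_one _).le

end SparseGrid

section GridToSparse

lemma norm_map_le_of_forall_abs_le {κ W : Type*} [Fintype κ] [DecidableEq κ]
    [SeminormedAddCommGroup W] [NormedSpace ℝ W] (A : EuclideanSpace ℝ κ →ₗ[ℝ] W)
    {h : EuclideanSpace ℝ κ} {ε c : ℝ} (hε : ∀ j, |h j| ≤ ε)
    (hA : ∀ j, ‖A (EuclideanSpace.single j 1)‖ ≤ c) : ‖A h‖ ≤ Fintype.card κ * (ε * c) := by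
  have hsum : A h = ∑ j, h j • A (EuclideanSpace.single j 1) := by
    simp only [← map_smul, ← map_sum]
    congr
    ext i
    simp [Pi.single_apply]
  rw [hsum, ← nsmul_eq_mul, ← Finset.card_univ, ← Finset.sum_const]
  refine norm_sum_le_of_le _ fun j _ => ?_
  rw [norm_smul]
  exact mul_le_mul (hε j) (hA j) (norm_nonneg _) ((abs_nonneg _).trans (hε j))

lemma sq_bounds_of_near {a a' b b' : ℝ} (ha : 0 ≤ a) (ha' : 0 ≤ a') (hb : 0 ≤ b) (hb' : 0 ≤ b')
    (haa : |a - a'| ≤ b / 100) (hbb : |b - b'| ≤ b / 100) (hlow : 3 / 4 * b' ^ 2 ≤ a' ^ 2)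
    (hup : a' ^ 2 ≤ 5 / 4 * b' ^ 2) : 1 / 2 * b ^ 2 ≤ a ^ 2 ∧ a ^ 2 ≤ 2 * b ^ 2 := by
  rw [abs_le] at haa hbb
  have hlow' : 43 / 50 * b' ≤ a' := le_of_sq_le_sq (by nlinarith) ha'
  have hup' : a' ≤ 28 / 25 * b' := le_of_sq_le_sq (by nlinarith) (by positivity)
  have : 4 / 5 * b ≤ a := by linarith
  have : a ≤ 6 / 5 * b := by linarith
  constructor <;> nlinarith

/-- The vector with integer coordinates `z`. -/
def latticeVector {d : ℕ} (z : Fin d → ℤ) : EuclideanSpace ℝ (Fin d) :=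
  WithLp.toLp 2 fun j => (z j : ℝ)

lemma latticeVector_single_one {d : ℕ} (j : Fin d) :
    latticeVector (Pi.single j 1) = EuclideanSpace.single j 1 := by
  ext i
  simp [latticeVector, Pi.single_apply]

variable {d M k : ℕ} {m : ℝ} {W W' : Type*} [NormedAddCommGroup W] [NormedSpace ℝ W]
  [NormedAddCommGroup W'] [NormedSpace ℝ W'] {A : EuclideanSpace ℝ (Fin d) →ₗ[ℝ] W}
  {B : EuclideanSpace ℝ (Fin d) →ₗ[ℝ] W'}

lemma abs_norm_map_sub_le_of_mesh (hM : 20000 * d ^ 3 ≤ M ^ 2) (hM0 : 0 < M) (hm : 0 ≤ m)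
    (hA : ∀ j, ‖A (EuclideanSpace.single j 1)‖ ^ 2 ≤ 2 * (d * m)) {v u : EuclideanSpace ℝ (Fin d)}
    (hu : ∀ j, |v j - u j| ≤ ‖v‖ / M) {b : ℝ} (hb : 0 ≤ b) (hvb : m * ‖v‖ ^ 2 ≤ b ^ 2) :
    |‖A v‖ - ‖A u‖| ≤ b / 100 := by
  have : (0 : ℝ) < M := by exact_mod_cast hM0
  have hMd : (20000 : ℝ) * d ^ 3 ≤ M ^ 2 := by exact_mod_cast hM
  calc |‖A v‖ - ‖A u‖| ≤ ‖A (v - u)‖ := by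
        rw [map_sub]
        exact abs_norm_sub_norm_le _ _
    _ ≤ d * (‖v‖ / M * √(2 * (d * m))) := by
        simpa using norm_map_le_of_forall_abs_le A (h := v - u) hu
          fun j => Real.le_sqrt_of_sq_le (hA j)
    _ ≤ b / 100 := by
        refine le_of_sq_le_sq ?_ (by positivity)
        calc (d * (‖v‖ / M * √(2 * (d * m)))) ^ 2
            = 20000 * d ^ 3 / M ^ 2 * (m * ‖v‖ ^ 2) / 10000 := by
              rw [mul_pow, mul_pow, Real.sq_sqrt (by positivity)]
              ring
          _ ≤ 1 * b ^ 2 / 10000 := by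
              gcongr
              exact (div_le_one (by positivity)).2 hMd
          _ = (b / 100) ^ 2 := by ring

lemma norm_sq_bounds_of_sparseGrid (hk : 1 ≤ k) (hM : 20000 * d ^ 3 ≤ M ^ 2) (hM0 : 0 < M)
    (hm : 0 ≤ m) (hlow : ∀ v, m * ‖v‖ ^ 2 ≤ ‖B v‖ ^ 2)
    (hup : ∀ j, ‖B (EuclideanSpace.single j 1)‖ ^ 2 ≤ d * m)
    (hgrid : ∀ z ∈ sparseGrid (Fin d) M k,
      3 / 4 * ‖B (latticeVector z)‖ ^ 2 ≤ ‖A (latticeVector z)‖ ^ 2 ∧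
        ‖A (latticeVector z)‖ ^ 2 ≤ 5 / 4 * ‖B (latticeVector z)‖ ^ 2)
    {v : EuclideanSpace ℝ (Fin d)} (hv : spar v ≤ k) :
    1 / 2 * ‖B v‖ ^ 2 ≤ ‖A v‖ ^ 2 ∧ ‖A v‖ ^ 2 ≤ 2 * ‖B v‖ ^ 2 := by
  rcases eq_or_ne v 0 with rfl | hv0
  · simp
  obtain ⟨z, hz, hvz⟩ := exists_mem_sparseGrid_forall_abs_sub_le hM0 (norm_pos_iff.2 hv0)
    (PiLp.norm_apply_le v) hv
  have hA (j : Fin d) : ‖A (EuclideanSpace.single j 1)‖ ^ 2 ≤ 2 * (d * m) := by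
    have hj := (hgrid _ (single_one_mem_sparseGrid hM0 hk j)).2
    rw [latticeVector_single_one] at hj
    linarith [hup j, sq_nonneg ‖B (EuclideanSpace.single j 1)‖]
  have hB (j : Fin d) : ‖B (EuclideanSpace.single j 1)‖ ^ 2 ≤ 2 * (d * m) := by
    linarith [hup j, sq_nonneg ‖B (EuclideanSpace.single j 1)‖]
  obtain ⟨hlow', hup'⟩ := hgrid z hz
  have : 0 ≤ (‖v‖ / M) ^ 2 := sq_nonneg _
  refine sq_bounds_of_near (a' := ‖A ((‖v‖ / M) • latticeVector z)‖)
    (b' := ‖B ((‖v‖ / M) • latticeVector z)‖) (norm_nonneg _) (norm_nonneg _) (norm_nonneg _)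
    (norm_nonneg _) (abs_norm_map_sub_le_of_mesh hM hM0 hm hA hvz (norm_nonneg _) (hlow v))
    (abs_norm_map_sub_le_of_mesh hM hM0 hm hB hvz (norm_nonneg _) (hlow v)) ?_ ?_
  all_goals
    simp only [map_smul, norm_smul, mul_pow, Real.norm_eq_abs, sq_abs]
    nlinarith

end GridToSparse

section Rayleigh

variable {ι : Type*} [Fintype ι] [DecidableEq ι] {S : Matrix ι ι ℝ}

lemma inner_toEuclideanLin_eq_sum_eigenvalues (hS : S.IsHermitian) (v : EuclideanSpace ℝ ι) :
    ⟪v, Matrix.toEuclideanLin S v⟫ =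
      ∑ i, hS.eigenvalues i * ⟪hS.eigenvectorBasis i, v⟫ ^ 2 := by
  have heigen (i : ι) : Matrix.toEuclideanLin S (hS.eigenvectorBasis i) =
      hS.eigenvalues i • hS.eigenvectorBasis i := by
    rw [Matrix.toLpLin_apply, hS.mulVec_eigenvectorBasis]
    rfl
  rw [← hS.eigenvectorBasis.sum_inner_mul_inner v]
  refine Finset.sum_congr rfl fun i _ => ?_
  rw [← Matrix.isSymmetric_toEuclideanLin_iff.2 hS, heigen, real_inner_smul_left,
    real_inner_comm]
  ring

lemma sInf_eigenvalues_mul_norm_sq_le (hS : S.IsHermitian) (v : EuclideanSpace ℝ ι) :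
    sInf (Set.range hS.eigenvalues) * ‖v‖ ^ 2 ≤ ⟪v, Matrix.toEuclideanLin S v⟫ := by
  rw [inner_toEuclideanLin_eq_sum_eigenvalues hS, ← hS.eigenvectorBasis.sum_sq_inner_right v,
    Finset.mul_sum]
  gcongr with i
  exact csInf_le (Set.finite_range _).bddBelow ⟨i, rfl⟩

lemma inner_toEuclideanLin_le (hS : S.IsHermitian) (v : EuclideanSpace ℝ ι) :
    ⟪v, Matrix.toEuclideanLin S v⟫ ≤ sSup (Set.range hS.eigenvalues) * ‖v‖ ^ 2 := by
  rw [inner_toEuclideanLin_eq_sum_eigenvalues hS, ← hS.eigenvectorBasis.sum_sq_inner_right v,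
    Finset.mul_sum]
  gcongr with i
  exact le_csSup (Set.finite_range _).bddAbove ⟨i, rfl⟩

lemma sInf_eigenvalues_le_apply (hS : S.IsHermitian) (i : ι) :
    sInf (Set.range hS.eigenvalues) ≤ S i i := by
  simpa [EuclideanSpace.inner_single_left, Matrix.toLpLin_apply] using
    sInf_eigenvalues_mul_norm_sq_le hS (EuclideanSpace.single i 1)

lemma sInf_eigenvalues_pos [Nonempty ι] (hS : S.PosDef) :
    0 < sInf (Set.range hS.isHermitian.eigenvalues) := by
  obtain ⟨i, hi⟩ := (Set.range_nonempty _).csInf_mem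
    (Set.finite_range hS.isHermitian.eigenvalues)
  exact hi ▸ hS.eigenvalues_pos i

lemma norm_sq_toEuclideanLin_sqrt (hS : S.PosSemidef) (v : EuclideanSpace ℝ ι) :
    ‖Matrix.toEuclideanLin (CFC.sqrt S) v‖ ^ 2 = ⟪v, Matrix.toEuclideanLin S v⟫ := by
  have hsymm : (CFC.sqrt S).IsHermitian :=
    (Matrix.nonneg_iff_posSemidef.1 (CFC.sqrt_nonneg S)).isHermitian
  rw [← real_inner_self_eq_norm_sq, Matrix.isSymmetric_toEuclideanLin_iff.2 hsymm]
  conv_rhs => rw [← CFC.sqrt_mul_sqrt_self S hS.nonneg]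
  simp [Matrix.toLpLin_apply, Matrix.mulVec_mulVec]

lemma norm_sq_toEuclideanLin_sqrt_single (hS : S.PosSemidef) (i : ι) :
    ‖Matrix.toEuclideanLin (CFC.sqrt S) (EuclideanSpace.single i 1)‖ ^ 2 = S i i := by
  rw [norm_sq_toEuclideanLin_sqrt hS, EuclideanSpace.inner_single_left]
  simp [Matrix.toLpLin_apply]

end Rayleigh

section GoodSample

variable {n d k : ℕ} {B : EuclideanSpace ℝ (Fin d) →ₗ[ℝ] EuclideanSpace ℝ (Fin d)} {t : ℝ}
  {ω : (Fin n → Fin d → ℝ) × (Fin n → ℝ)}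

/-- The sample `ω` is good for the design `Z B` when the noiseless responses to all `k`-sparse
grid vectors are within a factor `1 ± 1 / 4` of their mean, and those to the columns of `B`, with
noise of matching strength added or subtracted, within a factor `1 ± t`.  The grid has mesh
`d ^ (-3)`, which is fine enough for covariances of condition number at most `d`. -/
structure IsGoodSample (B : EuclideanSpace ℝ (Fin d) →ₗ[ℝ] EuclideanSpace ℝ (Fin d)) (k : ℕ)
    (t : ℝ) (ω : (Fin n → Fin d → ℝ) × (Fin n → ℝ)) : Prop where
  grid : ∀ z ∈ sparseGrid (Fin d) (d ^ 3) k, Concentrates ω (B (latticeVector z)) 0 (1 / 4)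
  noise_add : ∀ i, Concentrates ω (B (EuclideanSpace.single i 1))
    ‖B (EuclideanSpace.single i 1)‖ t
  noise_sub : ∀ i, Concentrates ω (B (EuclideanSpace.single i 1))
    (-‖B (EuclideanSpace.single i 1)‖) t

lemma measureReal_exists_not_concentrates_le {α : Type*} (N : Finset α)
    (v : α → EuclideanSpace ℝ (Fin d)) (b : α → ℝ) (h0 : 0 ≤ t) (h1 : t ≤ 1) :
    (designNoiseMeasure n d).real {ω | ∃ a ∈ N, ¬ Concentrates ω (v a) (b a) t} ≤
      N.card * (2 * Real.exp (-(n * t ^ 2 / 8))) := by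
  have hunion : {ω : (Fin n → Fin d → ℝ) × (Fin n → ℝ) |
      ∃ a ∈ N, ¬ Concentrates ω (v a) (b a) t} = ⋃ a ∈ N, {ω | ¬ Concentrates ω (v a) (b a) t} := by
    ext ω
    simp
  rw [hunion, ← nsmul_eq_mul, ← Finset.sum_const]
  exact (measureReal_biUnion_finset_le _ _).trans
    (Finset.sum_le_sum fun a _ => measureReal_not_concentrates_le _ _ h0 h1)

lemma measureReal_not_isGoodSample_le_card (h0 : 0 ≤ t) (h1 : t ≤ 1) :
    (designNoiseMeasure n d).real {ω | ¬ IsGoodSample B k t ω} ≤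
      (sparseGrid (Fin d) (d ^ 3) k).card * (2 * Real.exp (-(n * (1 / 4) ^ 2 / 8))) +
        (d * (2 * Real.exp (-(n * t ^ 2 / 8))) + d * (2 * Real.exp (-(n * t ^ 2 / 8)))) := by
  have hsub : {ω : (Fin n → Fin d → ℝ) × (Fin n → ℝ) | ¬ IsGoodSample B k t ω} ⊆
      {ω | ∃ z ∈ sparseGrid (Fin d) (d ^ 3) k,
        ¬ Concentrates ω (B (latticeVector z)) 0 (1 / 4)} ∪
      ({ω | ∃ i ∈ Finset.univ, ¬ Concentrates ω (B (EuclideanSpace.single i 1))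
        ‖B (EuclideanSpace.single i 1)‖ t} ∪
      {ω | ∃ i ∈ Finset.univ, ¬ Concentrates ω (B (EuclideanSpace.single i 1))
        (-‖B (EuclideanSpace.single i 1)‖) t}) := by
    intro ω hω
    contrapose! hω
    simp only [Set.mem_union, Set.mem_ofPred_eq, not_or, not_exists, not_and, not_not,
      Finset.mem_univ, true_imp_iff] at hω
    exact not_not.2 ⟨hω.1, hω.2.1, hω.2.2⟩
  refine (measureReal_mono hsub).trans ((measureReal_union_le _ _).trans (add_le_add
    (measureReal_exists_not_concentrates_le _ _ _ (by norm_num) (by norm_num))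
    ((measureReal_union_le _ _).trans (add_le_add ?_ ?_))))
  all_goals
    simpa using measureReal_exists_not_concentrates_le (n := n) (Finset.univ : Finset (Fin d))
      _ _ h0 h1

lemma card_sparseGrid_cube_le (hd : 3 ≤ d) :
    (sparseGrid (Fin d) (d ^ 3) k).card ≤ d ^ (5 * k) := by
  have : Nonempty (Fin d) := ⟨0, by omega⟩
  have hbase : d * (2 * d ^ 3 + 1) ≤ d ^ 5 := by
    have : 1 ≤ d ^ 3 := Nat.one_le_pow _ _ (by omega)
    calc d * (2 * d ^ 3 + 1) ≤ d * (d * d ^ 3) := Nat.mul_le_mul_left _ (by nlinarith)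
      _ = d ^ 5 := by ring
  rw [pow_mul]
  refine card_sparseGrid_le.trans (Nat.pow_le_pow_left ?_ k)
  rwa [Fintype.card_fin]

lemma exp_neg_le_inv_pow {x y : ℝ} (hy : 0 < y) {p : ℕ} (hx : p * Real.log y ≤ x) :
    Real.exp (-x) ≤ (y ^ p)⁻¹ := by
  rw [← Real.exp_log (pow_pos hy p), ← Real.exp_neg, Real.log_pow]
  exact Real.exp_le_exp.2 (neg_le_neg hx)

lemma card_sparseGrid_mul_exp_le (hd : 3 ≤ d) (hk : 1 ≤ k) (hn : 896 * k * Real.log d ≤ n) :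
    ((sparseGrid (Fin d) (d ^ 3) k).card : ℝ) * (2 * Real.exp (-(n * (1 / 4) ^ 2 / 8))) ≤
      1 / d := by
  have hdR : (3 : ℝ) ≤ d := by exact_mod_cast hd
  have hd0 : (0 : ℝ) < d := by linarith
  calc _ ≤ (d : ℝ) ^ (5 * k) * (2 * ((d : ℝ) ^ (7 * k))⁻¹) := by
        gcongr
        · exact_mod_cast card_sparseGrid_cube_le hd
        · refine exp_neg_le_inv_pow hd0 ?_
          push_cast
          linarith
    _ = 2 / (d : ℝ) ^ (2 * k) := by
        rw [show 7 * k = 5 * k + 2 * k by ring, pow_add]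
        field_simp
    _ ≤ 2 / (d : ℝ) ^ 2 := by
        gcongr
        · linarith
        · omega
    _ ≤ 1 / d := by
        rw [div_le_div_iff₀ (by positivity) hd0]
        nlinarith

lemma card_mul_exp_le (hd : 3 ≤ d) (ht : n * t ^ 2 = 36 * Real.log d) :
    d * (2 * Real.exp (-(n * t ^ 2 / 8))) ≤ 1 / (2 * d) := by
  have hdR : (3 : ℝ) ≤ d := by exact_mod_cast hd
  have hd0 : (0 : ℝ) < d := by linarith
  have hlog : 0 < Real.log d := Real.log_pos (by linarith)
  calc _ ≤ d * (2 * ((d : ℝ) ^ 4)⁻¹) := by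
        gcongr
        refine exp_neg_le_inv_pow hd0 ?_
        rw [ht]
        push_cast
        linarith
    _ = 2 / (d : ℝ) ^ 3 := by field_simp
    _ ≤ 1 / (2 * d) := by
        rw [div_le_div_iff₀ (by positivity) (by positivity)]
        nlinarith [mul_pos hd0 hd0]

lemma measureReal_not_isGoodSample_le (hd : 3 ≤ d) (hk : 1 ≤ k)
    (hn : 896 * k * Real.log d ≤ n) (h0 : 0 ≤ t) (ht : n * t ^ 2 = 36 * Real.log d) :
    (designNoiseMeasure n d).real {ω | ¬ IsGoodSample B k t ω} ≤ 2 / d := by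
  have hdR : (3 : ℝ) ≤ d := by exact_mod_cast hd
  have hlog : 0 < Real.log d := Real.log_pos (by linarith)
  have hkR : (1 : ℝ) ≤ k := by exact_mod_cast hk
  have hn' : 896 * Real.log d ≤ n := by nlinarith
  have h1 : t ≤ 1 := by
    by_contra! hlt
    have := mul_le_mul_of_nonneg_left (one_le_pow₀ hlt.le : 1 ≤ t ^ 2) n.cast_nonneg
    linarith
  calc _ ≤ (1 / d + (1 / (2 * d) + 1 / (2 * d)) : ℝ) :=
        (measureReal_not_isGoodSample_le_card h0 h1).trans (add_le_add
          (card_sparseGrid_mul_exp_le hd hk hn)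
          (add_le_add (card_mul_exp_le hd ht) (card_mul_exp_le hd ht)))
    _ = 2 / d := by
        field_simp
        norm_num

lemma IsGoodSample.one_sub_le_measureReal (hd : 3 ≤ d) (hk : 1 ≤ k)
    (hn : 896 * k * Real.log d ≤ n) :
    1 - 2 / d ≤ (designNoiseMeasure n d).real
      {ω | IsGoodSample B k (6 * Real.sqrt (Real.log d / n)) ω} := by
  have hlog : 0 < Real.log d := Real.log_pos (by exact_mod_cast (by omega : 1 < d))
  have hn0 : (0 : ℝ) < n := lt_of_lt_of_le (by positivity) hn
  have hlevel : n * (6 * Real.sqrt (Real.log d / n)) ^ 2 = 36 * Real.log d := by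
    rw [mul_pow, Real.sq_sqrt (by positivity)]
    field_simp
    norm_num
  have hbad : (designNoiseMeasure n d).real
      {ω | IsGoodSample B k (6 * Real.sqrt (Real.log d / n)) ω}ᶜ ≤ 2 / d :=
    measureReal_not_isGoodSample_le hd hk hn (by positivity) hlevel
  have hcover := measureReal_union_le (μ := designNoiseMeasure n d)
    {ω | IsGoodSample B k (6 * Real.sqrt (Real.log d / n)) ω}
    {ω | IsGoodSample B k (6 * Real.sqrt (Real.log d / n)) ω}ᶜ
  rw [Set.union_compl_self, probReal_univ] at hcover
  linarith

end GoodSample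

section NormalizedDesign

variable {n d : ℕ} {k : ℕ} {t : ℝ} {ω : (Fin n → Fin d → ℝ) × (Fin n → ℝ)}
  {S : Matrix (Fin d) (Fin d) ℝ}

/-- The design `X`, divided by `√n` so that its Gram matrix is the empirical covariance. -/
def normalizedDesign (X : Matrix (Fin n) (Fin d) ℝ) :
    EuclideanSpace ℝ (Fin d) →L[ℝ] EuclideanSpace ℝ (Fin n) :=
  (Real.sqrt n)⁻¹ • (Matrix.toEuclideanLin X).toContinuousLinearMap

lemma normalizedDesign_apply (X : Matrix (Fin n) (Fin d) ℝ) (v : EuclideanSpace ℝ (Fin d)) :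
    normalizedDesign X v = (Real.sqrt n)⁻¹ • Matrix.toEuclideanLin X v :=
  rfl

lemma norm_sq_inv_sqrt_smul {V : Type*} [NormedAddCommGroup V] [NormedSpace ℝ V] (n : ℕ)
    (v : V) :
    ‖(Real.sqrt n)⁻¹ • v‖ ^ 2 = ‖v‖ ^ 2 / n := by
  rw [norm_smul, mul_pow, norm_inv, inv_pow, Real.norm_eq_abs, sq_abs,
    Real.sq_sqrt n.cast_nonneg, inv_mul_eq_div]

lemma adjoint_normalizedDesign_apply (X : Matrix (Fin n) (Fin d) ℝ)
    (w : EuclideanSpace ℝ (Fin n)) (i : Fin d) :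
    (normalizedDesign X).adjoint ((Real.sqrt n)⁻¹ • w) i =
      ⟪w, Matrix.toEuclideanLin X (EuclideanSpace.single i 1)⟫ / n := by
  calc (normalizedDesign X).adjoint ((Real.sqrt n)⁻¹ • w) i
      = ⟪(normalizedDesign X).adjoint ((Real.sqrt n)⁻¹ • w), EuclideanSpace.single i 1⟫ := by
        simp [EuclideanSpace.inner_single_right]
    _ = (Real.sqrt n)⁻¹ * ((Real.sqrt n)⁻¹ *
          ⟪w, Matrix.toEuclideanLin X (EuclideanSpace.single i 1)⟫) := by
        rw [ContinuousLinearMap.adjoint_inner_left, normalizedDesign_apply, real_inner_smul_left,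
          real_inner_smul_right]
    _ = _ := by
        rw [← mul_assoc, ← mul_inv, Real.mul_self_sqrt n.cast_nonneg, inv_mul_eq_div]

lemma leastSquares_normalizedDesign (X : Matrix (Fin n) (Fin d) ℝ) (w : Fin n → ℝ)
    (θstar θ : EuclideanSpace ℝ (Fin d)) :
    leastSquares (normalizedDesign X)
      (normalizedDesign X θstar + (Real.sqrt n)⁻¹ • WithLp.toLp 2 w) θ =
      1 / (2 * n) * ‖WithLp.toLp 2 (X.mulVec θstar + w - X.mulVec θ)‖ ^ 2 := by
  rw [leastSquares, normalizedDesign_apply, normalizedDesign_apply, ← smul_add, ← smul_sub,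
    norm_sq_inv_sqrt_smul, WithLp.toLp_sub, WithLp.toLp_add, Matrix.toLpLin_apply,
    Matrix.toLpLin_apply]
  ring

lemma response_toEuclideanLin (ω : (Fin n → Fin d → ℝ) × (Fin n → ℝ))
    (M : Matrix (Fin d) (Fin d) ℝ) (v : EuclideanSpace ℝ (Fin d)) (b : ℝ) :
    response ω (Matrix.toEuclideanLin M v) b =
      Matrix.toEuclideanLin (Matrix.of ω.1 * M) v + b • WithLp.toLp 2 ω.2 := by
  rw [response, Matrix.toLpLin_apply, Matrix.toLpLin_apply, Matrix.toLpLin_apply,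
    Matrix.mulVec_mulVec]

lemma Concentrates.normalizedDesign_bounds (hn : 0 < n) {M : Matrix (Fin d) (Fin d) ℝ}
    {v : EuclideanSpace ℝ (Fin d)} (h : Concentrates ω (Matrix.toEuclideanLin M v) 0 t) :
    (1 - t) * ‖Matrix.toEuclideanLin M v‖ ^ 2 ≤ ‖normalizedDesign (Matrix.of ω.1 * M) v‖ ^ 2 ∧
      ‖normalizedDesign (Matrix.of ω.1 * M) v‖ ^ 2 ≤
        (1 + t) * ‖Matrix.toEuclideanLin M v‖ ^ 2 := by
  have hn0 : (0 : ℝ) < n := Nat.cast_pos.2 hn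
  rw [Concentrates, response_toEuclideanLin, zero_smul, add_zero, abs_le] at h
  rw [normalizedDesign_apply, norm_sq_inv_sqrt_smul, le_div_iff₀ hn0, div_le_iff₀ hn0]
  constructor <;> linarith

lemma IsGoodSample.restrictedEigenvalueBounds (hd : 28 ≤ d) (hn : 0 < n) (hk : 1 ≤ k)
    (hS : S.PosDef) (hcond : sSup (Set.range hS.isHermitian.eigenvalues) ≤
      d * sInf (Set.range hS.isHermitian.eigenvalues))
    (h : IsGoodSample (Matrix.toEuclideanLin (CFC.sqrt S)) k t ω) :
    RestrictedEigenvalueBounds (normalizedDesign (Matrix.of ω.1 * CFC.sqrt S)) k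
      (sInf (Set.range hS.isHermitian.eigenvalues) / 2)
      (2 * sSup (Set.range hS.isHermitian.eigenvalues)) := by
  have : Nonempty (Fin d) := ⟨0, by omega⟩
  have hlow := sInf_eigenvalues_mul_norm_sq_le hS.isHermitian
  have hup := inner_toEuclideanLin_le hS.isHermitian
  simp only [← norm_sq_toEuclideanLin_sqrt hS.posSemidef] at hlow hup
  have hmesh : 20000 * d ^ 3 ≤ (d ^ 3) ^ 2 := by
    rw [sq]
    exact Nat.mul_le_mul_right _ (le_trans (by norm_num) (Nat.pow_le_pow_left hd 3))
  have hgrid : ∀ z ∈ sparseGrid (Fin d) (d ^ 3) k,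
      3 / 4 * ‖Matrix.toEuclideanLin (CFC.sqrt S) (latticeVector z)‖ ^ 2 ≤
        ‖(normalizedDesign (Matrix.of ω.1 * CFC.sqrt S)).toLinearMap (latticeVector z)‖ ^ 2 ∧
      ‖(normalizedDesign (Matrix.of ω.1 * CFC.sqrt S)).toLinearMap (latticeVector z)‖ ^ 2 ≤
        5 / 4 * ‖Matrix.toEuclideanLin (CFC.sqrt S) (latticeVector z)‖ ^ 2 := by
    intro z hz
    have := (h.grid z hz).normalizedDesign_bounds hn
    norm_num at this
    exact this
  intro v hv
  have hsparse := norm_sq_bounds_of_sparseGrid hk hmesh (by positivity)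
    (sInf_eigenvalues_pos hS).le hlow
    (fun j => (hup _).trans (by simpa using hcond)) hgrid hv
  exact ⟨le_trans (by linarith [hlow v]) hsparse.1, hsparse.2.trans (by linarith [hup v])⟩

-- Polarization: the two squared responses differ by four times the cross term.
lemma abs_inner_toEuclideanLin_le {v : EuclideanSpace ℝ (Fin d)}
    (hadd : Concentrates ω v ‖v‖ t) (hsub : Concentrates ω v (-‖v‖) t) :
    |⟪WithLp.toLp 2 ω.2, Matrix.toEuclideanLin (Matrix.of ω.1) v⟫| ≤ n * t * ‖v‖ := by
  obtain rfl | hv := eq_or_ne v 0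
  · simp
  have hv0 : 0 < ‖v‖ := norm_pos_iff.2 hv
  rw [Concentrates, response] at hadd hsub
  rw [neg_smul, ← sub_eq_add_neg, norm_sub_sq_real, neg_sq] at hsub
  rw [norm_add_sq_real] at hadd
  rw [real_inner_smul_right, real_inner_comm, abs_le] at hadd hsub
  refine le_of_mul_le_mul_left ?_ hv0
  rw [← abs_of_pos hv0, ← abs_mul, abs_of_pos hv0, abs_le]
  constructor <;> nlinarith

lemma IsGoodSample.abs_adjoint_noise_le (hn : 0 < n) (ht : 0 ≤ t) (hS : S.PosSemidef)
    (h : IsGoodSample (Matrix.toEuclideanLin (CFC.sqrt S)) k t ω) {ζ σ : ℝ} (hσ : 0 ≤ σ)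
    (hζ : ∀ i, S i i ≤ ζ) (i : Fin d) :
    |(normalizedDesign (Matrix.of ω.1 * CFC.sqrt S)).adjoint
      ((Real.sqrt n)⁻¹ • WithLp.toLp 2 (σ • ω.2)) i| ≤ σ * (t * Real.sqrt ζ) := by
  have hn0 : (0 : ℝ) < n := Nat.cast_pos.2 hn
  have hcol : ‖Matrix.toEuclideanLin (CFC.sqrt S) (EuclideanSpace.single i 1)‖ ≤ Real.sqrt ζ :=
    Real.le_sqrt_of_sq_le ((norm_sq_toEuclideanLin_sqrt_single hS i).trans_le (hζ i))
  have hcross := abs_inner_toEuclideanLin_le (h.noise_add i) (h.noise_sub i)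
  set z : EuclideanSpace ℝ (Fin n) := WithLp.toLp 2 ω.2
  set x := Matrix.toEuclideanLin (Matrix.of ω.1)
    (Matrix.toEuclideanLin (CFC.sqrt S) (EuclideanSpace.single i 1)) with hx
  have hcoord : (normalizedDesign (Matrix.of ω.1 * CFC.sqrt S)).adjoint
      ((Real.sqrt n)⁻¹ • WithLp.toLp 2 (σ • ω.2)) i = σ * (⟪z, x⟫ / n) := by
    rw [adjoint_normalizedDesign_apply, WithLp.toLp_smul, real_inner_smul_left, mul_div_assoc, hx,
      Matrix.toLpLin_apply, Matrix.toLpLin_apply, Matrix.toLpLin_apply, Matrix.mulVec_mulVec]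
  rw [hcoord, abs_mul, abs_of_nonneg hσ, abs_div, abs_of_pos hn0]
  gcongr
  rw [div_le_iff₀ hn0]
  nlinarith [mul_le_mul_of_nonneg_left hcol (mul_nonneg hn0.le ht)]

theorem one_sub_le_measureReal_polyak_converges {s : ℕ} (hS : S.PosDef)
    {HT RT : EuclideanSpace ℝ (Fin d) → EuclideanSpace ℝ (Fin d)} (hHT : IsHT d s HT)
    (hRT : IsRT d s RT) (hk : 0 < k) (hks : k < s) (hsd : s ≤ d) {μ L ζ σ R : ℝ} (hμ0 : 0 < μ)
    (hμ : μ ≤ sInf (Set.range hS.isHermitian.eigenvalues) / 2)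
    (hL : 2 * sSup (Set.range hS.isHermitian.eigenvalues) ≤ L) (hs : 320 * (L / μ) * k ≤ s)
    (hn : 1792 * s * Real.log d ≤ n) (hζ : ∀ i, S i i ≤ ζ) (hσ : 0 < σ)
    (hR : 1152 * ζ * σ ^ 2 * s * Real.log d ≤ n * μ ^ 2 * R)
    {θstar θ0 : EuclideanSpace ℝ (Fin d)} (hstar : spar θstar ≤ k) (hθ0 : spar θ0 ≤ s) :
    1 - 2 / d ≤ (designNoiseMeasure n d).real {ω |
      ∀ f, f = leastSquares (normalizedDesign (Matrix.of ω.1 * CFC.sqrt S))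
        (normalizedDesign (Matrix.of ω.1 * CFC.sqrt S) θstar +
          (Real.sqrt n)⁻¹ • WithLp.toLp 2 (σ • ω.2)) →
      ∀ θ : ℕ → EuclideanSpace ℝ (Fin d), θ 0 = θ0 →
        (∀ t, θ (t + 1) =
          RT (θ t - polyakStep HT f (f θstar) (θ t) • gradient f (θ t))) →
        (∀ t, R ≤ ‖θ t - θstar‖ ^ 2 →
          ‖θ (t + 1) - θstar‖ ^ 2 ≤ (1 - 1 / (80 * (L / μ))) * ‖θ t - θstar‖ ^ 2) ∧
        ∀ T, ‖θ T - θstar‖ ^ 2 < R →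
          ∀ t, T ≤ t → ‖θ t - θstar‖ ^ 2 ≤ (1 + 1 / (80 * (L / μ))) * R} := by
  have heigen : sInf (Set.range hS.isHermitian.eigenvalues) ≤
      sSup (Set.range hS.isHermitian.eigenvalues) :=
    Real.sInf_le_sSup _ (Set.finite_range _).bddBelow (Set.finite_range _).bddAbove
  have hκ : 1 ≤ L / μ := (one_le_div hμ0).2 (by linarith)
  have hkR : (1 : ℝ) ≤ k := Nat.one_le_cast.2 hk
  have hsdR : (s : ℝ) ≤ d := Nat.cast_le.2 hsd
  have hs320 : (320 : ℝ) ≤ s := by nlinarith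
  have hd : 28 ≤ d := by exact_mod_cast (by linarith : (28 : ℝ) ≤ d)
  have hcond : sSup (Set.range hS.isHermitian.eigenvalues) ≤
      d * sInf (Set.range hS.isHermitian.eigenvalues) := by
    have hκd : L / μ ≤ d := by nlinarith
    rw [div_le_iff₀ hμ0] at hκd
    nlinarith
  have hlog : 0 < Real.log d := Real.log_pos (by linarith)
  have hn0 : (0 : ℝ) < n := lt_of_lt_of_le (by positivity) hn
  have hζ0 : 0 < ζ := hS.diag_pos.trans_le (hζ ⟨0, by omega⟩)
  have hR0 : 0 < R := pos_of_mul_pos_right (hR.trans_lt' (by positivity)) (by positivity)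
  have hnoise : 32 * s * (σ * (6 * Real.sqrt (Real.log d / n) * Real.sqrt ζ)) ^ 2 ≤
      μ ^ 2 * R := by
    simp only [mul_pow]
    rw [Real.sq_sqrt hζ0.le, Real.sq_sqrt (by positivity)]
    field_simp
    linarith
  refine (IsGoodSample.one_sub_le_measureReal (B := Matrix.toEuclideanLin (CFC.sqrt S))
    (k := 2 * s) (by omega) (by omega) (by push_cast; linarith)).trans
    (measureReal_mono fun ω hω f hf θ hθ hrec => ?_)
  have hbounds := hω.restrictedEigenvalueBounds hd (Nat.cast_pos.1 hn0) (by omega) hS hcond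
  exact polyak_reciprocal_thresholding_converges hHT hRT hk hks hsd hμ0 (by linarith) hs
    (hbounds.mono hμ hL) (by positivity)
    (hω.abs_adjoint_noise_le (Nat.cast_pos.1 hn0) (by positivity) hS.posSemidef hσ.le hζ) hnoise hR0
    hstar hf (hθ ▸ hθ0) hrec

end NormalizedDesign

lemma le_sample_size_of_curvature_pos {m ζ s ℓ n : ℝ} (hn : 0 < n) (hζ : 0 < ζ) (hm : m ≤ ζ)
    (h : 0 < m / 2 - 3 * (1000 * ζ * ℓ / n) * s) : 6000 * s * ℓ ≤ n := by
  have hscale : 3 * (1000 * ζ * ℓ / n) * s = ζ * (3000 * s * ℓ / n) := by ring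
  have hhalf : ζ * (3000 * s * ℓ / n) ≤ ζ * (1 / 2) := by linarith
  have := le_of_mul_le_mul_left hhalf hζ
  rw [div_le_iff₀ hn] at this
  linarith

/-- Corollary 3 for sparse linear regression with random Gaussian design: with probability at
least `1 - e^{-c₀n} - 2/d`, Sparse Polyak with reciprocal thresholding contracts linearly up to
the statistical precision and then remains trapped there.  The design `X` has i.i.d. `N(0,Σ)`
rows (realized as `Z·Σ^{1/2}` for a standard Gaussian matrix `Z`) and the noise is `N(0,σ²Iₙ)`
(realized as `σ·z` for a standard Gaussian vector `z`). -/
theorem statement14 :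
    ∃ c₀ c₁ : ℝ, 0 < c₀ ∧ 0 < c₁ ∧
      ∀ (n d sstar s : ℕ), 1 ≤ sstar → sstar < s → s < d →
      ∀ (Sig : Matrix (Fin d) (Fin d) ℝ) (hSig : Sig.PosDef)
        (θstar : EuclideanSpace ℝ (Fin d)), spar θstar ≤ sstar →
      ∀ σ : ℝ, 0 < σ →
      ∀ (HT RT : EuclideanSpace ℝ (Fin d) → EuclideanSpace ℝ (Fin d)),
        IsHT d s HT → IsRT d s RT →
      ∀ θ0 : EuclideanSpace ℝ (Fin d), spar θ0 ≤ s →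
      ∀ L μ ζ τ μbar κ C R : ℝ,
        L = 2 * sSup (Set.range hSig.isHermitian.eigenvalues) →
        μ = sInf (Set.range hSig.isHermitian.eigenvalues) / 2 →
        ζ = sSup (Set.range fun i => Sig i i) →
        τ = c₁ * ζ * Real.log d / n →
        μbar = μ - 3 * τ * s →
        κ = (L + 3 * τ * s) / μbar →
        C = 2 * Real.sqrt ζ →
        R = 288 * C ^ 2 * σ ^ 2 * s * Real.log d / (n * μbar ^ 2) →
        0 < μbar → 1 ≤ κ → (s : ℝ) ≥ 320 * κ * sstar →
        1 - Real.exp (-(c₀ * n)) - 2 / d ≤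
          (((Measure.pi fun _ : Fin n => Measure.pi fun _ : Fin d =>
                gaussianReal 0 1).prod
              (Measure.pi fun _ : Fin n => gaussianReal 0 1))
            {ω : (Fin n → Fin d → ℝ) × (Fin n → ℝ) |
              ∀ (X : Matrix (Fin n) (Fin d) ℝ), X = Matrix.of ω.1 * CFC.sqrt Sig →
              ∀ y : Fin n → ℝ,
                y = X.mulVec (WithLp.equiv 2 (Fin d → ℝ) θstar) + σ • ω.2 →
              ∀ f : EuclideanSpace ℝ (Fin d) → ℝ,
                f = (fun θ => 1 / (2 * (n : ℝ)) *
                  ‖(WithLp.equiv 2 (Fin n → ℝ)).symm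
                    (y - X.mulVec (WithLp.equiv 2 (Fin d → ℝ) θ))‖ ^ 2) →
              ∀ θ : ℕ → EuclideanSpace ℝ (Fin d), θ 0 = θ0 →
                (∀ t, θ (t + 1) =
                  RT (θ t - (max (f (θ t) - f θstar) 0 /
                    (5 * ‖HT (gradient f (θ t))‖ ^ 2)) • gradient f (θ t))) →
                (∀ t, ‖θ t - θstar‖ ^ 2 ≥ R →
                  ‖θ (t + 1) - θstar‖ ^ 2 ≤ (1 - 1 / (80 * κ)) * ‖θ t - θstar‖ ^ 2) ∧
                (∀ T, ‖θ T - θstar‖ ^ 2 < R →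
                  ∀ t, T ≤ t → ‖θ t - θstar‖ ^ 2 ≤ (1 + 1 / (80 * κ)) * R)}).toReal := by
  refine ⟨1, 1000, one_pos, by norm_num, ?_⟩
  intro n d sstar s hk hks hsd Sig hSig θstar hstar σ hσ HT RT hHT hRT θ0 hθ0 L μ ζ τ μbar κ C R
    hL hμ hζ hτ hμbar hκ hC hR hμ0 hκ1 hsk
  obtain rfl | hn := n.eq_zero_or_pos
  · exact le_trans (by simp [div_nonneg]) ENNReal.toReal_nonneg
  have hnR : (0 : ℝ) < n := Nat.cast_pos.2 hn
  have hlog : 0 < Real.log d := Real.log_pos (by exact_mod_cast (by omega : 1 < d))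
  have hdiag (i) : Sig i i ≤ ζ := hζ ▸ le_csSup (Set.finite_range _).bddAbove ⟨i, rfl⟩
  have hmζ := (sInf_eigenvalues_le_apply hSig.isHermitian ⟨0, by omega⟩).trans (hdiag _)
  have hζ0 : 0 < ζ := hSig.diag_pos.trans_le (hdiag ⟨0, by omega⟩)
  have hτs : 0 ≤ 3 * τ * s := by rw [hτ]; positivity
  have hsize : 6000 * s * Real.log d ≤ n :=
    le_sample_size_of_curvature_pos hnR hζ0 hmζ (by rwa [hμbar, hμ, hτ] at hμ0)
  have hprecision : 1152 * ζ * σ ^ 2 * s * Real.log d ≤ n * μbar ^ 2 * R := by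
    refine le_of_eq ?_
    rw [hR, hC, mul_pow, Real.sq_sqrt hζ0.le]
    field_simp
    ring
  have hgood := one_sub_le_measureReal_polyak_converges hSig hHT hRT hk hks hsd.le hμ0
    (by linarith) (by linarith) (hκ ▸ hsk) (by nlinarith) hdiag hσ hprecision hstar hθ0
  refine (sub_le_sub_right (sub_le_self _ (Real.exp_nonneg _)) _).trans
    (hgood.trans (measureReal_mono ?_))
  rintro ω hω X rfl y rfl f hf
  exact hκ ▸ hω f (hf.trans (funext fun θ => (leastSquares_normalizedDesign _ _ _ _).symm))
end
end
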